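/- arXiv:1501.01690 — 2 statements merged into one kernel-verified Lean document; each statement's English description precedes it below -/
import Mathlib

section
/- Suppose G is a locally finite bipartite Borel graph on a Polish space X with bipartition {B₀, B₁} (the sets B₀, B₁ need not be Borel), and there exists ε > 0 such that for every finite set F with F ⊆ B₀ or F ⊆ B₁ one has |N_G(F)| ≥ (1 + ε)·|F|. Then there is a comeager G-invariant Borel set A ⊆ X such that the induced graph G ↾ A has a Borel perfect matching. -/
/-- `N_G(F)`: the set of neighbors of points of `F` that are not contained in `F`. -/
def graphNbhd {X : Type*} (G : SimpleGraph X) (F : Set X) : Set X :=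
  {y | y ∉ F ∧ ∃ x ∈ F, G.Adj x y}

/-- `M` is a perfect matching of the induced graph `G ↾ A`, viewed as a symmetric set of
edges (ordered pairs) such that every vertex of `A` is incident to exactly one edge of `M`. -/
def IsPerfectMatchingOn {X : Type*} (G : SimpleGraph X) (A : Set X) (M : Set (X × X)) : Prop :=
  (∀ p ∈ M, p.1 ∈ A ∧ p.2 ∈ A ∧ G.Adj p.1 p.2) ∧
  (∀ x y : X, (x, y) ∈ M ↔ (y, x) ∈ M) ∧
  (∀ x ∈ A, ∃! y : X, (x, y) ∈ M)

/-!
For Borel `A` meeting every ball of radius `r` in one point at most, match each `a ∈ A` along an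
edge whose removal preserves Hall's condition. A set that is connected in the square of `G` and
close to several points of `A` has at least on the order of `r` vertices for each of them, so if
large square-connected sets have surplus factor `1 + ε`, then for large `r` they keep `1 + ε / 2`;
a small one is close to at most one point of `A`, whose edge was chosen harmless. Hence Hall's
condition survives, and the step can be repeated with sparser and sparser sets.

For each radius the space is covered by countably many Borel sets of that sparseness. Choosing one
of them for every radius, a generic sequence of choices covers all the points of comeagerly many
components, by a Kuratowski–Ulam argument. Borelness of each matching comes from the Lusin–Novikov
theorem, which for finite sections follows from Novikov's separation theorem.
-/

section CylinderInduction

open PiNat Function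

theorem cylinder_zero_induction {E : ℕ → Type*} {P : Set (∀ n, E n) → Prop}
    (step : ∀ z n, (∀ i, P (cylinder (update z n i) (n + 1))) → P (cylinder z n))
    (bar : ∀ z, ∃ n, P (cylinder z n)) (z₀ : ∀ n, E n) : P (cylinder z₀ 0) := by
  by_contra hbad
  have extend : ∀ n z, ¬P (cylinder z n) → ∃ i, ¬P (cylinder (update z n i) (n + 1)) := by
    intro n z hz
    contrapose! hz
    exact step z n hz
  have (n : ℕ) : Nonempty (E n) := ⟨z₀ n⟩
  choose! next hnext using extend
  let approx : ℕ → ∀ n, E n := Nat.rec z₀ fun n z => update z n (next n z)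
  have approx_succ (n) : approx (n + 1) = update (approx n) n (next n (approx n)) := rfl
  have approx_bad (n) : ¬P (cylinder (approx n) n) := by
    induction n with
    | zero => exact hbad
    | succ n ih => exact hnext n _ ih
  let limit : ∀ n, E n := fun n => approx (n + 1) n
  have limit_mem (n) : limit ∈ cylinder (approx n) n := by
    induction n with
    | zero => simp
    | succ n ih =>
      intro i hi
      obtain rfl | hin := Nat.eq_or_lt_of_le (Nat.le_of_lt_succ hi)
      · rfl
      · rw [approx_succ, update_of_ne hin.ne, ih i hin]
  obtain ⟨n, hn⟩ := bar limit
  exact approx_bad n (mem_cylinder_iff_eq.1 (limit_mem n) ▸ hn)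

end CylinderInduction

section Novikov

open Set MeasureTheory PiNat

/-- The sets `A n` can be enlarged to measurable sets with empty intersection; for two sets this is
the separation of Lusin's theorem. -/
def JointlySeparable {α κ : Type*} [MeasurableSpace α] (A : κ → Set α) : Prop :=
  ∃ B : κ → Set α, (∀ n, MeasurableSet (B n)) ∧ (∀ n, A n ⊆ B n) ∧ ⋂ n, B n = ∅

namespace JointlySeparable

variable {α κ : Type*} [MeasurableSpace α] {A : κ → Set α}

theorem of_disjoint {m n : κ} (hmn : m ≠ n) {u v : Set α} (hu : MeasurableSet u)
    (hv : MeasurableSet v) (huv : Disjoint u v) (hm : A m ⊆ u) (hn : A n ⊆ v) :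
    JointlySeparable A := by
  classical
  refine ⟨fun k => if k = m then u else if k = n then v else univ, fun k => ?_, fun k => ?_, ?_⟩
  · dsimp only
    split_ifs
    exacts [hu, hv, MeasurableSet.univ]
  · dsimp only
    split_ifs with hkm hkn
    exacts [hkm ▸ hm, hkn ▸ hn, subset_univ _]
  · refine eq_empty_of_forall_notMem fun x hx => ?_
    have hxu := mem_iInter.1 hx m
    have hxv := mem_iInter.1 hx n
    simp only [if_true, hmn.symm, if_false] at hxu hxv
    exact disjoint_left.1 huv hxu hxv

theorem of_iUnion {ι : Type*} [Countable ι] (m : κ) {C : ι → κ → Set α}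
    (hC : ∀ i, JointlySeparable (C i)) (hm : A m ⊆ ⋃ i, C i m)
    (hne : ∀ n ≠ m, ∀ i, A n ⊆ C i n) : JointlySeparable A := by
  classical
  choose B hB hCB hempty using hC
  refine ⟨fun n => if n = m then ⋃ i, B i n else ⋂ i, B i n, fun n => ?_, fun n => ?_, ?_⟩
  · dsimp only
    split_ifs
    exacts [.iUnion fun i => hB i n, .iInter fun i => hB i n]
  · dsimp only
    split_ifs with hnm
    · exact hnm ▸ hm.trans (iUnion_mono fun i => hCB i m)
    · exact subset_iInter fun i => (hne n hnm i).trans (hCB i n)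
  · refine eq_empty_of_forall_notMem fun x hx => ?_
    have hxm := mem_iInter.1 hx m
    simp only [if_true, mem_iUnion] at hxm
    obtain ⟨i, hi⟩ := hxm
    suffices x ∈ ⋂ n, B i n from (hempty i ▸ this : x ∈ (∅ : Set α))
    refine mem_iInter.2 fun n => ?_
    by_cases hnm : n = m
    · exact hnm ▸ hi
    · have hxn := mem_iInter.1 hx n
      simp only [hnm, if_false, mem_iInter] at hxn
      exact hxn i

end JointlySeparable

variable {α : Type*} [TopologicalSpace α] [T2Space α] [MeasurableSpace α] [OpensMeasurableSpace α]

theorem exists_jointlySeparable_image_cylinder {g : ℕ → (ℕ → ℕ) → α} (hg : ∀ n, Continuous (g n))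
    (hempty : ⋂ n, range (g n) = ∅) (z : ℕ → ℕ) :
    ∃ t, JointlySeparable fun n => g n '' cylinder z t := by
  obtain ⟨n, hn⟩ : ∃ n, g n z ≠ g 0 z := by
    by_contra! hconst
    exact hempty.subset (mem_iInter.2 fun n => ⟨z, hconst n⟩ : g 0 z ∈ ⋂ n, range (g n))
  have hn0 : n ≠ 0 := by
    rintro rfl
    exact hn rfl
  obtain ⟨u, v, hu, hv, hzu, hzv, huv⟩ := t2_separation hn
  have small (k : ℕ) {w : Set α} (hw : IsOpen w) (hzw : g k z ∈ w) :
      ∃ t, g k '' cylinder z t ⊆ w := by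
    obtain ⟨_, ⟨x, t, rfl⟩, hzx, hsub⟩ :=
      (isTopologicalBasis_cylinders (fun _ : ℕ => ℕ)).exists_subset_of_mem_open hzw
        (hw.preimage (hg k))
    exact ⟨t, image_subset_iff.2 (mem_cylinder_iff_eq.1 hzx ▸ hsub)⟩
  obtain ⟨t₁, ht₁⟩ := small n hu hzu
  obtain ⟨t₂, ht₂⟩ := small 0 hv hzv
  exact ⟨max t₁ t₂, .of_disjoint hn0 hu.measurableSet hv.measurableSet huv
    ((image_mono (cylinder_anti z (le_max_left t₁ t₂))).trans ht₁)
    ((image_mono (cylinder_anti z (le_max_right t₁ t₂))).trans ht₂)⟩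

theorem jointlySeparable_range {f : ℕ → (ℕ → ℕ) → α} (hf : ∀ n, Continuous (f n))
    (hempty : ⋂ n, range (f n) = ∅) : JointlySeparable fun n => range (f n) := by
  -- A single sequence `z` codes a point of every domain, so that prolonging `z` by one entry
  -- subdivides the domain of just one of the maps.
  let g (n : ℕ) (z : ℕ → ℕ) : α := f n fun j => z (Nat.pair n j)
  have hg (n) : Continuous (g n) := (hf n).comp (by fun_prop)
  have range_g (n) : range (g n) = range (f n) := by
    refine Function.Surjective.range_comp (f := fun (z : ℕ → ℕ) j => z (Nat.pair n j)) ?_ (f n)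
    exact fun w => ⟨fun m => w (Nat.unpair m).2, by simp⟩
  simp only [← range_g] at hempty ⊢
  suffices JointlySeparable fun n => g n '' cylinder 0 0 by simpa [image_univ] using this
  refine cylinder_zero_induction (P := fun S => JointlySeparable fun n => g n '' S)
    (fun z t hz => ?_) (exists_jointlySeparable_image_cylinder hg hempty) 0
  refine .of_iUnion (Nat.unpair t).1 hz ?_ ?_
  · rw [← image_iUnion, iUnion_cylinder_update z t]
  · rintro n hn i _ ⟨w, hw, rfl⟩
    refine ⟨Function.update w t i, fun k hk => ?_, ?_⟩
    · obtain rfl | hkt := Nat.eq_or_lt_of_le (Nat.le_of_lt_succ hk)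
      · simp
      · simpa [hkt.ne] using hw k hkt
    · have hpair (j) : Nat.pair n j ≠ t := by
        rintro rfl
        simp at hn
      simp only [g, Function.update_of_ne (hpair _)]

theorem novikov_separation {A : ℕ → Set α} (hA : ∀ n, AnalyticSet (A n))
    (hempty : ⋂ n, A n = ∅) : JointlySeparable A := by
  by_cases hne : ∃ n, A n = ∅
  · obtain ⟨n, hn⟩ := hne
    exact .of_disjoint n.succ_ne_self.symm .empty .univ (empty_disjoint _) hn.subset
      (subset_univ _)
  · push Not at hne
    have hrange (n) : ∃ f : (ℕ → ℕ) → α, Continuous f ∧ range f = A n := by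
      have hAn := hA n
      rw [AnalyticSet] at hAn
      exact hAn.resolve_left (hne n).ne_empty
    choose f hf hfA using hrange
    simpa only [hfA] using jointlySeparable_range hf (by simpa only [hfA] using hempty)

end Novikov

section FiniteSections

open Set MeasureTheory

/-- The increasing `k`-tuples in the sections of `P`, each paired with the base point of its
section. -/
def increasingTuples {X Y : Type*} [Preorder Y] (P : Set (X × Y)) (k : ℕ) :
    Set (X × (Fin k → Y)) :=
  {q | StrictMono q.2 ∧ ∀ i, (q.1, q.2 i) ∈ P}

section LinearOrder

variable {X Y : Type*} [LinearOrder Y] {P : Set (X × Y)} {k : ℕ}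

theorem image_fst_increasingTuples (hfin : ∀ x, {y | (x, y) ∈ P}.Finite) :
    Prod.fst '' increasingTuples P k = {x | k ≤ {y | (x, y) ∈ P}.ncard} := by
  ext x
  constructor
  · rintro ⟨⟨x, v⟩, ⟨hmono, hv⟩, rfl⟩
    calc k = (range v).ncard := by simp [ncard_range_of_injective hmono.injective]
      _ ≤ _ := ncard_le_ncard (range_subset_iff.2 hv) (hfin _)
  · intro hk
    rw [mem_ofPred_eq, ncard_eq_toFinset_card _ (hfin x)] at hk
    obtain ⟨S, hS, rfl⟩ := Finset.exists_subset_card_eq hk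
    exact ⟨(x, S.orderEmbOfFin rfl), ⟨(S.orderEmbOfFin rfl).strictMono, fun i =>
      (hfin x).mem_toFinset.1 (hS (S.orderEmbOfFin_mem rfl i))⟩, rfl⟩

theorem injOn_fst_increasingTuples (hfin : ∀ x, {y | (x, y) ∈ P}.Finite) :
    InjOn Prod.fst (increasingTuples P k ∩ Prod.fst ⁻¹' {x | k + 1 ≤ {y | (x, y) ∈ P}.ncard}ᶜ) := by
  rintro ⟨x, v⟩ ⟨⟨hvmono, hv⟩, hx⟩ ⟨_, w⟩ ⟨⟨hwmono, hw⟩, -⟩ rfl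
  have range_eq {u : Fin k → Y} (humono : StrictMono u) (hu : ∀ i, (x, u i) ∈ P) :
      range u = {y | (x, y) ∈ P} := by
    refine eq_of_subset_of_ncard_le (range_subset_iff.2 hu) ?_ (hfin x)
    rw [ncard_range_of_injective humono.injective, Nat.card_fin]
    simpa [Nat.lt_succ_iff] using hx
  exact congrArg (Prod.mk x)
    ((hvmono.range_inj hwmono).1 ((range_eq hvmono hv).trans (range_eq hwmono hw).symm))

end LinearOrder

section Real

variable {X : Type*} [MeasurableSpace X] {P : Set (X × ℝ)}

theorem measurableSet_increasingTuples (hP : MeasurableSet P) (k : ℕ) :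
    MeasurableSet (increasingTuples P k) := by
  have hmono : MeasurableSet {q : X × (Fin k → ℝ) | StrictMono q.2} := by
    simp only [StrictMono, ofPred_forall]
    exact .iInter fun i => .iInter fun j => .iInter fun _ =>
      measurableSet_lt (by fun_prop) (by fun_prop)
  have hmem : MeasurableSet {q : X × (Fin k → ℝ) | ∀ i, (q.1, q.2 i) ∈ P} := by
    rw [ofPred_forall]
    exact .iInter fun i => hP.preimage (by fun_prop : Measurable fun q : X × (Fin k → ℝ) =>
      (q.1, q.2 i))
  exact hmono.inter hmem

variable [StandardBorelSpace X]

theorem measurableSet_le_ncard_of_succ (hP : MeasurableSet P)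
    (hfin : ∀ x, {y | (x, y) ∈ P}.Finite) {k : ℕ}
    (hk : MeasurableSet {x | k + 1 ≤ {y | (x, y) ∈ P}.ncard}) :
    MeasurableSet {x | k ≤ {y | (x, y) ∈ P}.ncard} := by
  have hexact := ((measurableSet_increasingTuples hP k).inter (hk.compl.preimage measurable_fst))
    |>.image_of_measurable_injOn measurable_fst (injOn_fst_increasingTuples hfin)
  convert hk.union hexact using 1
  rw [image_inter_preimage, image_fst_increasingTuples hfin, union_inter_distrib_left,
    union_compl_self, inter_univ]
  exact (union_eq_self_of_subset_left fun x hx => Nat.le_of_succ_le hx).symm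

theorem measurableSet_le_ncard_of_bounded (hP : MeasurableSet P)
    (hfin : ∀ x, {y | (x, y) ∈ P}.Finite) {K : ℕ} (hK : ∀ x, {y | (x, y) ∈ P}.ncard < K) (k : ℕ) :
    MeasurableSet {x | k ≤ {y | (x, y) ∈ P}.ncard} := by
  have hempty {m} (hm : K ≤ m) : {x | m ≤ {y | (x, y) ∈ P}.ncard} = ∅ :=
    eq_empty_of_forall_notMem fun x hx => (hK x).not_ge (hm.trans hx)
  obtain hk | hk := le_total k K
  · induction hk using Nat.decreasingInduction with
    | self => exact hempty le_rfl ▸ .empty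
    | of_succ m _ ih => exact measurableSet_le_ncard_of_succ hP hfin ih
  · exact hempty hk ▸ .empty

theorem measurableSet_le_ncard (hP : MeasurableSet P) (hfin : ∀ x, {y | (x, y) ∈ P}.Finite)
    (k : ℕ) : MeasurableSet {x | k ≤ {y | (x, y) ∈ P}.ncard} := by
  let := upgradeStandardBorel X
  have hanalytic (j) : AnalyticSet {x | j ≤ {y | (x, y) ∈ P}.ncard} := by
    rw [← image_fst_increasingTuples hfin]
    exact (measurableSet_increasingTuples hP j).analyticSet_image measurable_fst
  have hempty : ⋂ j, {x | j ≤ {y | (x, y) ∈ P}.ncard} = ∅ :=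
    eq_empty_of_forall_notMem fun x hx => (mem_iInter.1 hx _).not_gt (Nat.lt_succ_self _)
  obtain ⟨B, hB, hsub, hBempty⟩ := novikov_separation hanalytic hempty
  obtain rfl | hk := k.eq_zero_or_pos
  · simp
  -- Off `B j` the sections have fewer than `j` points.
  let Q (j : ℕ) : Set (X × ℝ) := P ∩ {p | p.1 ∉ B j}
  have section_of_mem {j x} (hx : x ∈ B j) : {y | (x, y) ∈ Q j} = ∅ := by simp [Q, hx]
  have section_of_notMem {j x} (hx : x ∉ B j) : {y | (x, y) ∈ Q j} = {y | (x, y) ∈ P} := by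
    simp [Q, hx]
  have hQ (j) : MeasurableSet {x | k ≤ {y | (x, y) ∈ Q j}.ncard} := by
    refine measurableSet_le_ncard_of_bounded (K := j + 1)
      (hP.inter ((hB j).compl.preimage measurable_fst))
      (fun x => (hfin x).subset fun y hy => hy.1) (fun x => ?_) k
    by_cases hx : x ∈ B j
    · exact (section_of_mem hx).symm ▸ by simp
    · exact (section_of_notMem hx).symm ▸
        lt_of_not_ge fun hj => hx (hsub j (Nat.le_of_succ_le hj))
  convert MeasurableSet.iUnion hQ using 1
  ext x
  obtain ⟨j, hj⟩ : ∃ j, x ∉ B j := by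
    simpa using (hBempty ▸ notMem_empty x : x ∉ ⋂ n, B n)
  simp only [mem_iUnion, mem_ofPred_eq]
  refine ⟨fun hx => ⟨j, section_of_notMem hj ▸ hx⟩, fun ⟨i, hi⟩ => ?_⟩
  by_cases hx : x ∈ B i
  · simp only [section_of_mem hx, ncard_empty] at hi
    omega
  · exact section_of_notMem hx ▸ hi

end Real

section StandardBorel

variable {X Y : Type*} [MeasurableSpace X] [StandardBorelSpace X] [MeasurableSpace Y]
  [StandardBorelSpace Y] {P Q : X → Y → Prop}

theorem measurable_ncard_section (hP : MeasurableSet {p : X × Y | P p.1 p.2})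
    (hfin : ∀ x, {y | P x y}.Finite) : Measurable fun x => {y | P x y}.ncard := by
  obtain ⟨e, he⟩ := exists_measurableEmbedding_real Y
  let P' : Set (X × ℝ) := Prod.map id e '' {p : X × Y | P p.1 p.2}
  have section_eq (x) : {t | (x, t) ∈ P'} = e '' {y | P x y} := by
    ext t
    simp [P']
  have hP' : MeasurableSet P' := (MeasurableEmbedding.id.prodMap he).measurableSet_image.2 hP
  refine measurable_of_Ici fun k => ?_
  convert measurableSet_le_ncard hP' (fun x => section_eq x ▸ (hfin x).image e) k using 1
  ext x
  simp [section_eq, ncard_image_of_injective _ he.injective]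

theorem measurableSet_exists (hP : MeasurableSet {p : X × Y | P p.1 p.2})
    (hfin : ∀ x, {y | P x y}.Finite) : MeasurableSet {x | ∃ y, P x y} := by
  convert measurable_ncard_section hP hfin (measurableSet_Ioi (a := 0)) using 1
  ext x
  simp [ncard_pos (hfin x), Set.Nonempty]

theorem measurableSet_forall_imp (hP : MeasurableSet {p : X × Y | P p.1 p.2})
    (hfin : ∀ x, {y | P x y}.Finite) (hQ : MeasurableSet {p : X × Y | Q p.1 p.2}) :
    MeasurableSet {x | ∀ y, P x y → Q x y} := by
  convert (measurableSet_exists (P := fun x y => P x y ∧ ¬Q x y) (hP.inter hQ.compl)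
    fun x => (hfin x).subset fun y hy => hy.1).compl using 1
  ext x
  simp

theorem exists_measurableSet_uniformization (hP : MeasurableSet {p : X × Y | P p.1 p.2})
    (hfin : ∀ x, {y | P x y}.Finite) :
    ∃ R : X → Y → Prop, MeasurableSet {p : X × Y | R p.1 p.2} ∧ (∀ x y, R x y → P x y) ∧
      ∀ x, (∃ y, P x y) → ∃! y, R x y := by
  obtain ⟨e, he⟩ := exists_measurableEmbedding_real Y
  refine ⟨fun x y => P x y ∧ ∀ z, P x z → e y ≤ e z, hP.inter ?_, fun x y h => h.1,
    fun x hx => ?_⟩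
  · refine measurableSet_forall_imp (X := X × Y) (P := fun q z => P q.1 z)
      (Q := fun q z => e q.2 ≤ e z) ?_ (fun q => hfin q.1) ?_
    · exact hP.preimage (by fun_prop : Measurable fun q : (X × Y) × Y => (q.1.1, q.2))
    · exact measurableSet_le (he.measurable.comp (by fun_prop)) (he.measurable.comp (by fun_prop))
  · obtain ⟨y, hy, hmin⟩ := exists_min_image {y | P x y} e (hfin x) hx
    exact ⟨y, ⟨hy, hmin⟩, fun z hz => he.injective ((hz.2 y hy).antisymm (hmin z hz.1))⟩

theorem measurableSet_forall_finset {Q : X → Set Y → Prop}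
    (hP : MeasurableSet {p : X × Y | P p.1 p.2}) (hfin : ∀ x, {y | P x y}.Finite)
    (hQ : ∀ k, MeasurableSet {q : X × (Fin k → Y) | Q q.1 (range q.2)}) :
    MeasurableSet {x | ∀ F : Finset Y, (∀ y ∈ F, P x y) → Q x F} := by
  have htuple (k : ℕ) :
      MeasurableSet {x | ∀ v : Fin k → Y, (∀ i, P x (v i)) → Q x (range v)} := by
    refine measurableSet_forall_imp (P := fun x (v : Fin k → Y) => ∀ i, P x (v i)) ?_
      (fun x => ?_) (hQ k)
    · rw [ofPred_forall]
      exact .iInter fun i => hP.preimage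
        (by fun_prop : Measurable fun q : X × (Fin k → Y) => (q.1, q.2 i))
    · simpa [Set.pi] using Set.Finite.pi' fun _ : Fin k => hfin x
  convert MeasurableSet.iInter htuple using 1
  ext x
  simp only [mem_ofPred_eq, mem_iInter]
  constructor
  · intro h k v hv
    classical
    simpa using h (Finset.univ.image v) (by simpa using hv)
  · intro h F hF
    have hrange : range (fun i => (F.equivFin.symm i : Y)) = F :=
      (F.equivFin.symm.surjective.range_comp ((↑) : F → Y)).trans Subtype.range_coe
    exact hrange ▸ h F.card _ fun i => hF _ (F.equivFin.symm i).2

end StandardBorel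

end FiniteSections

section Distance

open Set MeasureTheory

variable {X : Type*} {G : SimpleGraph X}

theorem edist_le_add {x y z : X} {m n : ℕ} (hxy : G.edist x y ≤ m) (hyz : G.edist y z ≤ n) :
    G.edist x z ≤ (m + n : ℕ) :=
  G.edist_triangle.trans (by simpa using add_le_add hxy hyz)

theorem edist_le_natCast_iff_exists_walk {x y : X} {r : ℕ} :
    G.edist x y ≤ r ↔ ∃ w : G.Walk x y, w.length ≤ r := by
  refine ⟨fun h => ?_, fun ⟨w, hw⟩ => (SimpleGraph.edist_le w).trans (by exact_mod_cast hw)⟩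
  obtain ⟨w, hw⟩ := SimpleGraph.exists_walk_of_edist_ne_top (ne_top_of_le_ne_top (by simp) h)
  exact ⟨w, by rw [← hw] at h; exact_mod_cast h⟩

theorem edist_le_succ_iff {x y : X} {r : ℕ} :
    G.edist x y ≤ (r + 1 : ℕ) ↔ G.edist x y ≤ r ∨ ∃ z, G.Adj x z ∧ G.edist z y ≤ r := by
  simp only [edist_le_natCast_iff_exists_walk]
  constructor
  · rintro ⟨_ | ⟨hxz, w⟩, hw⟩
    · exact .inl ⟨.nil, by simp⟩
    · exact .inr ⟨_, hxz, w, by simpa using hw⟩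
  · rintro (⟨w, hw⟩ | ⟨z, hxz, w, hw⟩)
    · exact ⟨w, by omega⟩
    · exact ⟨.cons hxz w, by simpa using hw⟩

theorem reachable_iff_exists_edist_le {x y : X} : G.Reachable x y ↔ ∃ r : ℕ, G.edist x y ≤ r :=
  ⟨fun ⟨w⟩ => ⟨w.length, SimpleGraph.edist_le w⟩, fun ⟨_, h⟩ =>
    SimpleGraph.reachable_of_edist_ne_top (ne_top_of_le_ne_top (by simp) h)⟩

theorem edist_le_one_of_adj {x y : X} (h : G.Adj x y) : G.edist x y ≤ (1 : ℕ) :=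
  SimpleGraph.edist_le h.toWalk

theorem edist_le_two_of_adj_of_adj {x y z : X} (hxz : G.Adj x z) (hyz : G.Adj y z) :
    G.edist x y ≤ (2 : ℕ) :=
  edist_le_add (edist_le_one_of_adj hxz) (edist_le_one_of_adj hyz.symm)

theorem finite_edist_le (hfin : ∀ x, (G.neighborSet x).Finite) (r : ℕ) (x : X) :
    {y | G.edist x y ≤ r}.Finite := by
  induction r generalizing x with
  | zero => simp
  | succ r ih =>
    refine ((ih x).union ((hfin x).biUnion fun z _ => ih z)).subset fun y hy => ?_
    exact (edist_le_succ_iff.1 hy).imp_right fun ⟨z, hxz, hzy⟩ => mem_biUnion hxz hzy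

variable [MeasurableSpace X] [StandardBorelSpace X]

theorem measurableSet_edist_le (hG : MeasurableSet {p : X × X | G.Adj p.1 p.2})
    (hfin : ∀ x, (G.neighborSet x).Finite) (r : ℕ) :
    MeasurableSet {p : X × X | G.edist p.1 p.2 ≤ r} := by
  induction r with
  | zero => simpa using measurableSet_eq_fun measurable_fst measurable_snd
  | succ r ih =>
    simp only [edist_le_succ_iff, ofPred_or]
    refine ih.union (measurableSet_exists (X := X × X)
      (P := fun p z => G.Adj p.1 z ∧ G.edist z p.2 ≤ r) ?_ fun p => (hfin p.1).subset fun z hz =>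
        hz.1)
    exact (hG.preimage (by fun_prop : Measurable fun q : (X × X) × X => (q.1.1, q.2))).inter
      (ih.preimage (by fun_prop : Measurable fun q : (X × X) × X => (q.2, q.1.2)))

theorem measurableSet_forall_reachable_mem (hG : MeasurableSet {p : X × X | G.Adj p.1 p.2})
    (hfin : ∀ x, (G.neighborSet x).Finite) {D : Set X} (hD : MeasurableSet D) :
    MeasurableSet {x | ∀ y, G.Reachable x y → y ∈ D} := by
  convert MeasurableSet.iInter fun r : ℕ => measurableSet_forall_imp (Q := fun _ y => y ∈ D)
    (measurableSet_edist_le hG hfin r) (finite_edist_le hfin r) (hD.preimage measurable_snd) using 1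
  ext x
  simp only [mem_ofPred_eq, mem_iInter, reachable_iff_exists_edist_le, forall_exists_index]
  exact forall_comm

end Distance

section Hall

open Set

variable {X : Type*} {G : SimpleGraph X} {U V : Set X}

/-- The neighborhood of `F` in the induced graph `G ↾ U`. It may meet `F`, unlike `graphNbhd`. -/
def nbhdIn (G : SimpleGraph X) (U F : Set X) : Set X :=
  {y ∈ U | ∃ x ∈ F, G.Adj x y}

/-- Hall's condition for a perfect matching of the induced graph `G ↾ U`. -/
def HallOn (G : SimpleGraph X) (U : Set X) : Prop :=
  ∀ F : Finset X, (F : Set X) ⊆ U → F.card ≤ (nbhdIn G U F).ncard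

/-- Connectedness of `F` in the graph joining two vertices of `G` that have a common neighbor. -/
def IsSquareConnected (G : SimpleGraph X) (F : Finset X) : Prop :=
  ∀ S ⊂ F, S.Nonempty → ∃ a ∈ S, ∃ b ∈ F, b ∉ S ∧ ∃ z, G.Adj a z ∧ G.Adj b z

theorem nbhdIn_mono {S F : Set X} (hUV : U ⊆ V) (hSF : S ⊆ F) : nbhdIn G U S ⊆ nbhdIn G V F :=
  fun _ ⟨hyU, x, hx, hxy⟩ => ⟨hUV hyU, x, hSF hx, hxy⟩

theorem finite_nbhdIn (hfin : ∀ x, (G.neighborSet x).Finite) (F : Finset X) :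
    (nbhdIn G U F).Finite :=
  (F.finite_toSet.biUnion fun x _ => hfin x).subset fun _ ⟨_, _, hx, hxy⟩ => mem_biUnion hx hxy

theorem hallOn_of_forall_isSquareConnected (hfin : ∀ x, (G.neighborSet x).Finite)
    (h : ∀ F : Finset X, (F : Set X) ⊆ U → IsSquareConnected G F →
      F.card ≤ (nbhdIn G U F).ncard) : HallOn G U := by
  classical
  intro F
  induction F using Finset.strongInduction with
  | H F ih =>
    intro hF
    by_cases hconn : IsSquareConnected G F
    · exact h F hF hconn
    simp only [IsSquareConnected, not_forall] at hconn
    obtain ⟨S, hS, hSne, hcut⟩ := hconn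
    have hdiff : F \ S ⊂ F := Finset.sdiff_ssubset hS.subset hSne
    have hSF : (S : Set X) ⊆ F := by exact_mod_cast hS.subset
    have hdiffF : ((F \ S : Finset X) : Set X) ⊆ F := by exact_mod_cast hdiff.subset
    have hdisj : Disjoint (nbhdIn G U S) (nbhdIn G U (F \ S : Finset X)) :=
      disjoint_left.2 fun z ⟨_, a, ha, haz⟩ ⟨_, b, hb, hbz⟩ =>
        hcut ⟨a, ha, b, (Finset.mem_sdiff.1 hb).1, (Finset.mem_sdiff.1 hb).2, z, haz, hbz⟩
    calc F.card = S.card + (F \ S).card := by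
          rw [add_comm, Finset.card_sdiff_add_card_eq_card hS.subset]
      _ ≤ (nbhdIn G U S).ncard + (nbhdIn G U (F \ S : Finset X)).ncard :=
          add_le_add (ih S hS (hSF.trans hF)) (ih _ hdiff (hdiffF.trans hF))
      _ = (nbhdIn G U S ∪ nbhdIn G U (F \ S : Finset X)).ncard :=
          (ncard_union_eq hdisj (finite_nbhdIn hfin S) (finite_nbhdIn hfin _)).symm
      _ ≤ (nbhdIn G U F).ncard :=
          ncard_le_ncard (union_subset (nbhdIn_mono subset_rfl hSF) (nbhdIn_mono subset_rfl hdiffF))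
            (finite_nbhdIn hfin F)

theorem HallOn.exists_isMatching (hfin : ∀ x, (G.neighborSet x).Finite) {B₀ B₁ : Set X}
    (hG : G.IsBipartiteWith B₀ B₁) (hU : HallOn G U) :
    ∃ M : G.Subgraph, M.IsMatching ∧ M.verts = U := by
  classical
  let H : SimpleGraph U := G.induce U
  have hHfin (x : U) : (H.neighborSet x).Finite := (hfin x).preimage Subtype.val_injective.injOn
  have (x : U) : Fintype (H.neighborSet x) := (hHfin x).fintype
  have hH : H.IsBipartiteWith (Subtype.val ⁻¹' B₀) (Subtype.val ⁻¹' B₁) :=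
    ⟨hG.disjoint.preimage _, fun _ _ hab => hG.mem_of_adj hab⟩
  have hall (S : Set U) : S.ncard ≤ (⋃ x ∈ S, H.neighborSet x).ncard := by
    obtain hS | hS := S.finite_or_infinite
    · lift S to Finset U using hS
      have himage : Subtype.val '' (⋃ x ∈ S, H.neighborSet x) =
          nbhdIn G U (S.map (.subtype (· ∈ U))) := by
        ext y
        simp [nbhdIn, H, and_comm]
      calc (S : Set U).ncard = (S.map (.subtype (· ∈ U))).card := by simp
        _ ≤ _ := hU _ (by simp +contextual [subset_def])
        _ = _ := by rw [← himage, ncard_image_of_injective _ Subtype.val_injective]; simp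
    · simp [hS.ncard]
  obtain ⟨M, hM, hspan⟩ := SimpleGraph.exists_isPerfectMatching_of_forall_ncard_le hH hall
  exact ⟨M.map (SimpleGraph.Embedding.induce U).toHom, hM.map _ Subtype.val_injective,
    (congrArg (Subtype.val '' ·) hspan.verts_eq_univ).trans (Subtype.coe_image_univ U)⟩

theorem hallOn_verts_of_isMatching (hfin : ∀ x, (G.neighborSet x).Finite) {M : G.Subgraph}
    (hM : M.IsMatching) : HallOn G M.verts := by
  intro F hF
  choose! mate hmate using fun v (hv : v ∈ M.verts) => (hM hv).exists
  rw [← ncard_coe_finset]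
  refine ncard_le_ncard_of_injOn mate
    (fun x hx => ⟨(hmate x (hF hx)).snd_mem, x, hx, (hmate x (hF hx)).adj_sub⟩)
    (fun x hx y hy hxy => ?_) (finite_nbhdIn hfin F)
  exact hM.eq_of_adj_right (hmate x (hF hx)) (hxy ▸ hmate y (hF hy))

theorem isMatching_deleteVerts_pair {M : G.Subgraph} (hM : M.IsMatching) {x y : X}
    (hxy : M.Adj x y) : (M.deleteVerts {x, y}).IsMatching := by
  rintro v ⟨hv, hvxy⟩
  obtain ⟨w, hvw, huniq⟩ := hM hv
  refine ⟨w, ?_, fun z hz => huniq z (SimpleGraph.Subgraph.deleteVerts_le.2 hz)⟩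
  simp only [mem_insert_iff, mem_singleton_iff, not_or] at hvxy
  refine SimpleGraph.Subgraph.deleteVerts_adj.2 ⟨hv, by simp [hvxy], hvw.snd_mem, ?_, hvw⟩
  rintro (rfl | rfl)
  · exact hvxy.2 (hM.eq_of_adj_left hvw.symm hxy)
  · exact hvxy.1 (hM.eq_of_adj_right hvw hxy)

theorem HallOn.exists_adj (hfin : ∀ x, (G.neighborSet x).Finite) {B₀ B₁ : Set X}
    (hG : G.IsBipartiteWith B₀ B₁) (hU : HallOn G U) {x : X} (hx : x ∈ U) :
    ∃ y ∈ U, G.Adj x y ∧ HallOn G (U \ {x, y}) := by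
  obtain ⟨M, hM, rfl⟩ := hU.exists_isMatching hfin hG
  obtain ⟨y, hxy, -⟩ := hM hx
  exact ⟨y, hxy.snd_mem, hxy.adj_sub,
    hallOn_verts_of_isMatching hfin (isMatching_deleteVerts_pair hM hxy)⟩

end Hall

section SquareConnected

open Set

variable {X : Type*} {G : SimpleGraph X} {U : Set X} {F : Finset X}

theorem IsSquareConnected.exists_subset_edist_le (hF : IsSquareConnected G F) {u : X} (hu : u ∈ F)
    (r : ℕ) : ∃ S ⊆ F, u ∈ S ∧ (∀ v ∈ S, G.edist u v ≤ (2 * r : ℕ)) ∧ (S = F ∨ r < S.card) := by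
  classical
  induction r with
  | zero => exact ⟨{u}, by simpa using hu, by simp⟩
  | succ r ih =>
    obtain ⟨S, hSF, huS, hnear, hS⟩ := ih
    obtain rfl | hssub := hSF.eq_or_ssubset
    · exact ⟨S, hSF, huS, fun v hv => (hnear v hv).trans (Nat.cast_le.2 (by omega)), .inl rfl⟩
    obtain ⟨a, ha, b, hbF, hbS, z, haz, hbz⟩ := hF S hssub ⟨u, huS⟩
    refine ⟨insert b S, Finset.insert_subset hbF hSF, Finset.mem_insert_of_mem huS, ?_, .inr ?_⟩
    · intro v hv
      obtain rfl | hv := Finset.mem_insert.1 hv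
      · exact edist_le_add (hnear a ha) (edist_le_two_of_adj_of_adj haz hbz)
      · exact (hnear v hv).trans (Nat.cast_le.2 (by omega))
    · have := hS.resolve_left hssub.ne
      rw [Finset.card_insert_of_notMem hbS]
      omega

theorem IsSquareConnected.edist_le (hF : IsSquareConnected G F) {u v : X} (hu : u ∈ F)
    (hv : v ∈ F) : G.edist u v ≤ (2 * F.card : ℕ) := by
  obtain ⟨S, hSF, -, hnear, rfl | hS⟩ := hF.exists_subset_edist_le hu F.card
  · exact hnear v hv
  · exact absurd (Finset.card_le_card hSF) hS.not_ge

/-- Distinct points of `A` are at distance greater than `r`. -/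
def IsSparse (G : SimpleGraph X) (r : ℕ) (A : Set X) : Prop :=
  A.Pairwise fun x y => (r : ℕ∞) < G.edist x y

theorem IsSparse.mono {r s : ℕ} {A B : Set X} (hA : IsSparse G r A) (hsr : s ≤ r) (hBA : B ⊆ A) :
    IsSparse G s B :=
  (Set.Pairwise.mono hBA hA).mono' fun _ _ h => lt_of_le_of_lt (by exact_mod_cast hsr) h

theorem IsSparse.eq {r : ℕ} {A : Set X} (hA : IsSparse G r A) {x y : X} (hx : x ∈ A) (hy : y ∈ A)
    (hxy : G.edist x y ≤ r) : x = y :=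
  Set.Pairwise.eq hA hx hy hxy.not_gt

theorem IsSquareConnected.card_mul_le (hF : IsSquareConnected G F) {T : Finset X} {r s : ℕ}
    (hT : ∀ a ∈ T, ∃ u ∈ F, G.edist a u ≤ s) (hsparse : IsSparse G (4 * r + 2 * s) T)
    (hcard : 2 ≤ T.card) : T.card * (r + 1) ≤ F.card := by
  classical
  choose! u huF hu using hT
  have hball (a) (ha : a ∈ T) := hF.exists_subset_edist_le (huF a ha) r
  choose! S hSF _ hnear hS using hball
  have hdist {a} (ha : a ∈ T) {v} (hv : v ∈ S a) : G.edist a v ≤ (s + 2 * r : ℕ) :=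
    edist_le_add (hu a ha) (hnear a ha v hv)
  have hclose {a b v} (ha : a ∈ T) (hb : b ∈ T) (hva : v ∈ S a)
      (hbv : G.edist b v ≤ (s + 2 * r : ℕ)) : a = b :=
    hsparse.eq ha hb ((edist_le_add (hdist ha hva) (SimpleGraph.edist_comm.trans_le hbv)).trans
      (Nat.cast_le.2 (by omega)))
  have hlarge (a) (ha : a ∈ T) : r + 1 ≤ (S a).card := by
    refine (hS a ha).resolve_left fun hSa => ?_
    obtain ⟨b, hb, hba⟩ := Finset.exists_mem_ne hcard a
    exact hba (hclose ha hb (hSa ▸ huF b hb) ((hu b hb).trans (Nat.cast_le.2 (by omega)))).symm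
  have hdisj : (T : Set X).PairwiseDisjoint S := fun a ha b hb hab =>
    Finset.disjoint_left.2 fun v hva hvb => hab (hclose ha hb hva (hdist hb hvb))
  calc T.card * (r + 1) ≤ ∑ a ∈ T, (S a).card := by
        simpa using Finset.card_nsmul_le_sum T _ _ hlarge
    _ = (T.biUnion S).card := (Finset.card_biUnion hdisj).symm
    _ ≤ F.card := Finset.card_le_card (Finset.biUnion_subset.2 hSF)

/-- Removing `x` and `y` can only destroy Hall's condition near `x`, where finitely many sets have
to be tested for each `r`; hence the condition on `(x, y)` is Borel when `G` and `U` are. -/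
theorem hallOn_sdiff_pair_iff (hfin : ∀ x, (G.neighborSet x).Finite) (hU : HallOn G U) {x y : X}
    (hxy : G.Adj x y) :
    HallOn G (U \ {x, y}) ↔ ∀ r : ℕ, ∀ F : Finset X,
      (∀ v ∈ F, v ∈ U \ {x, y} ∧ G.edist x v ≤ r) → F.card ≤ (nbhdIn G (U \ {x, y}) F).ncard := by
  refine ⟨fun h r F hF => h F fun v hv => (hF v hv).1, fun h => ?_⟩
  refine hallOn_of_forall_isSquareConnected hfin fun F hF hconn => ?_
  by_cases hnear : ∃ u ∈ F, G.edist x u ≤ (2 : ℕ)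
  · obtain ⟨u, huF, hxu⟩ := hnear
    exact h _ F fun v hv => ⟨hF hv, edist_le_add hxu (hconn.edist_le huF hv)⟩
  · push Not at hnear
    refine (hU F (hF.trans sdiff_subset)).trans (ncard_le_ncard ?_ (finite_nbhdIn hfin F))
    rintro z ⟨hzU, u, huF, huz⟩
    refine ⟨⟨hzU, ?_⟩, u, huF, huz⟩
    rintro (rfl | rfl)
    · exact (hnear u huF).not_ge ((edist_le_one_of_adj huz.symm).trans (by norm_num))
    · exact (hnear u huF).not_ge (edist_le_two_of_adj_of_adj hxy huz)

end SquareConnected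

section SparseRemoval

open Set

variable {X : Type*} {G : SimpleGraph X} {U A : Set X} {p : X → X} {F : Finset X} {f₀ f : ℕ}
  {ε : ℝ}

/-- Hall's condition on `G ↾ U` with a surplus factor `1 + ε`, for square-connected sets of at
least `f` vertices. -/
def ExpandsOn (G : SimpleGraph X) (U : Set X) (f : ℕ) (ε : ℝ) : Prop :=
  ∀ F : Finset X, (F : Set X) ⊆ U → IsSquareConnected G F → f ≤ F.card →
    (1 + ε) * F.card ≤ (nbhdIn G U F).ncard

/-- The points `a` of `A` such that the neighborhood of `F` contains `a` or `p a`. -/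
def touching (G : SimpleGraph X) (A : Set X) (p : X → X) (F : Set X) : Set X :=
  {a ∈ A | ∃ u ∈ F, G.Adj u a ∨ G.Adj u (p a)}

theorem exists_edist_le_two_of_mem_touching (hp : ∀ a ∈ A, G.Adj a (p a)) {a : X} {F : Set X}
    (ha : a ∈ touching G A p F) : ∃ u ∈ F, G.edist a u ≤ (2 : ℕ) := by
  obtain ⟨haA, u, huF, hua | hupa⟩ := ha
  · exact ⟨u, huF, (edist_le_one_of_adj hua.symm).trans (Nat.cast_le.2 one_le_two)⟩
  · exact ⟨u, huF, edist_le_two_of_adj_of_adj (hp a haA) hupa⟩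

theorem finite_touching (hfin : ∀ x, (G.neighborSet x).Finite) (hp : ∀ a ∈ A, G.Adj a (p a))
    (F : Finset X) : (touching G A p F).Finite := by
  refine (F.finite_toSet.biUnion fun u _ => finite_edist_le hfin 2 u).subset fun a ha => ?_
  obtain ⟨u, huF, hau⟩ := exists_edist_le_two_of_mem_touching hp ha
  exact mem_biUnion huF (SimpleGraph.edist_comm.trans_le hau)

theorem nbhdIn_subset_union_touching (F : Set X) : nbhdIn G U F ⊆
    nbhdIn G (U \ (A ∪ p '' A)) F ∪ (touching G A p F ∪ p '' touching G A p F) := by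
  rintro z ⟨hzU, u, huF, huz⟩
  by_cases hz : z ∈ A ∪ p '' A
  · right
    obtain hzA | ⟨a, ha, rfl⟩ := hz
    · exact .inl ⟨hzA, u, huF, .inl huz⟩
    · exact .inr (mem_image_of_mem p ⟨ha, u, huF, .inr huz⟩)
  · exact .inl ⟨⟨hzU, hz⟩, u, huF, huz⟩

theorem ncard_nbhdIn_le_add_touching (hfin : ∀ x, (G.neighborSet x).Finite)
    (hp : ∀ a ∈ A, G.Adj a (p a)) (F : Finset X) : (nbhdIn G U F).ncard ≤
      (nbhdIn G (U \ (A ∪ p '' A)) F).ncard + 2 * (touching G A p F).ncard := by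
  have htouch := finite_touching hfin hp F
  calc (nbhdIn G U F).ncard
      ≤ (nbhdIn G (U \ (A ∪ p '' A)) F ∪ (touching G A p F ∪ p '' touching G A p F)).ncard :=
        ncard_le_ncard (nbhdIn_subset_union_touching _)
          ((finite_nbhdIn hfin F).union (htouch.union (htouch.image p)))
    _ ≤ (nbhdIn G (U \ (A ∪ p '' A)) F).ncard +
          ((touching G A p F).ncard + (p '' touching G A p F).ncard) :=
        (ncard_union_le _ _).trans (Nat.add_le_add_left (ncard_union_le _ _) _)
    _ ≤ _ := by
        have := ncard_image_le (f := p) htouch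
        omega

theorem IsSquareConnected.ncard_touching_mul_le (hfin : ∀ x, (G.neighborSet x).Finite)
    (hF : IsSquareConnected G F) (hp : ∀ a ∈ A, G.Adj a (p a)) (hA : IsSparse G (4 * f) A)
    (hcard : 2 ≤ (touching G A p F).ncard) : (touching G A p F).ncard * f ≤ F.card := by
  obtain _ | r := f
  · simp
  have htouch := finite_touching hfin hp F
  rw [ncard_eq_toFinset_card _ htouch] at hcard ⊢
  refine hF.card_mul_le (s := 2) (fun a ha => exists_edist_le_two_of_mem_touching hp
    (htouch.mem_toFinset.1 ha)) (hA.mono (by omega) ?_) hcard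
  exact htouch.coe_toFinset.subset.trans fun a ha => ha.1

theorem ExpandsOn.sdiff (hfin : ∀ x, (G.neighborSet x).Finite) (hU : ExpandsOn G U f₀ ε)
    (hf : f₀ ≤ f) (hε : 0 ≤ ε) (hεf : 4 ≤ ε * f) (hp : ∀ a ∈ A, G.Adj a (p a))
    (hA : IsSparse G (4 * f) A) : ExpandsOn G (U \ (A ∪ p '' A)) f (ε / 2) := by
  intro F hF hconn hfF
  set t := (touching G A p F).ncard
  have ht : t * f ≤ F.card := by
    obtain h | h := le_or_gt 2 t
    · exact hconn.ncard_touching_mul_le hfin hp hA h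
    · exact (mul_le_of_le_one_left f.zero_le (Nat.le_of_lt_succ h)).trans hfF
  have hremoved : 2 * (t : ℝ) ≤ ε / 2 * F.card :=
    calc 2 * (t : ℝ) ≤ ε * f / 2 * t := by gcongr; linarith
      _ = ε / 2 * (t * f : ℕ) := by push_cast; ring
      _ ≤ ε / 2 * F.card := by gcongr
  have hsurplus := hU F (hF.trans sdiff_subset) hconn (hf.trans hfF)
  have hloss : ((nbhdIn G U F).ncard : ℝ) ≤ (nbhdIn G (U \ (A ∪ p '' A)) F).ncard + 2 * t := by
    exact_mod_cast ncard_nbhdIn_le_add_touching hfin hp F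
  linarith

theorem HallOn.sdiff (hfin : ∀ x, (G.neighborSet x).Finite) (hU : HallOn G U)
    (hexp : ExpandsOn G (U \ (A ∪ p '' A)) f ε) (hε : 0 ≤ ε) (hp : ∀ a ∈ A, G.Adj a (p a))
    (hsafe : ∀ a ∈ A, HallOn G (U \ {a, p a})) (hA : IsSparse G (4 * f) A) :
    HallOn G (U \ (A ∪ p '' A)) := by
  refine hallOn_of_forall_isSquareConnected hfin fun F hF hconn => ?_
  obtain hlarge | hsmall := le_or_gt f F.card
  · have hsurplus := hexp F hF hconn hlarge
    have : (0 : ℝ) ≤ ε * F.card := by positivity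
    exact_mod_cast (by linarith : (F.card : ℝ) ≤ (nbhdIn G (U \ (A ∪ p '' A)) F).ncard)
  have hsub := nbhdIn_subset_union_touching (U := U) (A := A) (p := p) (G := G) (F : Set X)
  have hone : (touching G A p F).ncard ≤ 1 := by
    by_contra! htwo
    have := hconn.ncard_touching_mul_le hfin hp hA htwo
    nlinarith
  obtain hnone | ⟨a, hone⟩ := (ncard_le_one_iff_eq (finite_touching hfin hp F)).1 hone
  · rw [hnone, image_empty, union_empty, union_empty] at hsub
    exact (hU F (hF.trans sdiff_subset)).trans (ncard_le_ncard hsub (finite_nbhdIn hfin F))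
  · have haA : a ∈ A := (hone.symm.subset rfl).1
    have hpair : {a, p a} ⊆ A ∪ p '' A :=
      pair_subset (.inl haA) (.inr (mem_image_of_mem p haA))
    refine (hsafe a haA F (hF.trans (sdiff_subset_sdiff_right hpair))).trans
      (ncard_le_ncard ?_ (finite_nbhdIn hfin F))
    rintro z ⟨⟨hzU, hz⟩, hzF⟩
    refine (hsub ⟨hzU, hzF⟩).resolve_right ?_
    simpa [hone, and_comm] using hz

/-- The edges joining each `a ∈ A` to `p a`; a matching of `G` when `A` is sparse. -/
def pairing (G : SimpleGraph X) (A : Set X) (p : X → X) (hp : ∀ a ∈ A, G.Adj a (p a)) :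
    G.Subgraph where
  verts := A ∪ p '' A
  Adj x y := (x ∈ A ∧ p x = y) ∨ (y ∈ A ∧ p y = x)
  adj_sub := by
    rintro x y (⟨hx, rfl⟩ | ⟨hy, rfl⟩)
    exacts [hp x hx, (hp y hy).symm]
  edge_vert := by
    rintro x y (⟨hx, rfl⟩ | ⟨hy, rfl⟩)
    exacts [.inl hx, .inr (mem_image_of_mem p hy)]
  symm := ⟨fun x y => Or.symm⟩

theorem isMatching_pairing (hp : ∀ a ∈ A, G.Adj a (p a))
    (hA : IsSparse G 2 A) : (pairing G A p hp).IsMatching := by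
  have hpA {a b} (ha : a ∈ A) (hb : b ∈ A) : p a ≠ b := fun h => (hp a ha).ne <| h ▸
    hA.eq ha hb (h ▸ (edist_le_one_of_adj (hp a ha)).trans (Nat.cast_le.2 one_le_two))
  have hinj {a b} (ha : a ∈ A) (hb : b ∈ A) (hab : p a = p b) : a = b :=
    hA.eq ha hb (edist_le_two_of_adj_of_adj (hp a ha) (hab ▸ hp b hb))
  rintro v (hv | ⟨a, ha, rfl⟩)
  · refine ⟨p v, .inl ⟨hv, rfl⟩, ?_⟩
    rintro w (⟨-, rfl⟩ | ⟨hw, hwv⟩)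
    exacts [rfl, absurd hwv (hpA hw hv)]
  · refine ⟨a, .inr ⟨ha, rfl⟩, ?_⟩
    rintro w (⟨hpa, -⟩ | ⟨hw, hwa⟩)
    exacts [absurd rfl (hpA ha hpa), hinj hw ha hwa]

end SparseRemoval

section BorelMatching

open Set

variable {X : Type*} [MeasurableSpace X] [StandardBorelSpace X] {G : SimpleGraph X} {U D : Set X}
  {M N : G.Subgraph} {f₀ f : ℕ} {ε : ℝ}

theorem measurableSet_mem_sdiff_pair (hU : MeasurableSet U) :
    MeasurableSet {q : (X × X) × X | q.2 ∈ U \ {q.1.1, q.1.2}} :=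
  (measurable_snd hU).diff <|
    (measurableSet_eq_fun measurable_snd (measurable_fst.comp measurable_fst)).union
      (measurableSet_eq_fun measurable_snd (measurable_snd.comp measurable_fst))

theorem measurableSet_ncard_range_le_ncard_nbhdIn (hG : MeasurableSet {p : X × X | G.Adj p.1 p.2})
    (hfin : ∀ x, (G.neighborSet x).Finite) (hU : MeasurableSet U) (k : ℕ) :
    MeasurableSet {q : (X × X) × (Fin k → X) |
      (range q.2).ncard ≤ (nbhdIn G (U \ {q.1.1, q.1.2}) (range q.2)).ncard} := by
  have hrange : MeasurableSet {q : ((X × X) × (Fin k → X)) × X | q.2 ∈ range q.1.2} := by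
    simp only [mem_range, ← iUnion_ofPred]
    exact .iUnion fun i => measurableSet_eq_fun (by fun_prop) measurable_snd
  have hnbhd : MeasurableSet {q : ((X × X) × (Fin k → X)) × X |
      q.2 ∈ nbhdIn G (U \ {q.1.1.1, q.1.1.2}) (range q.1.2)} := by
    have hadj : MeasurableSet {q : ((X × X) × (Fin k → X)) × X | ∃ i, G.Adj (q.1.2 i) q.2} := by
      simp only [← iUnion_ofPred]
      refine .iUnion fun i => ?_
      have hpair : Measurable fun q : ((X × X) × (Fin k → X)) × X => (q.1.2 i, q.2) := by fun_prop
      exact hpair hG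
    have hpair : Measurable fun q : ((X × X) × (Fin k → X)) × X => (q.1.1, q.2) := by fun_prop
    have hmem := (hpair (measurableSet_mem_sdiff_pair hU)).inter hadj
    simp only [nbhdIn, exists_range_iff]
    exact hmem
  refine measurableSet_le
    (measurable_ncard_section (P := fun (q : (X × X) × (Fin k → X)) y => y ∈ range q.2) hrange
      fun q => finite_range q.2)
    (measurable_ncard_section (P := fun (q : (X × X) × (Fin k → X)) y =>
      y ∈ nbhdIn G (U \ {q.1.1, q.1.2}) (range q.2)) hnbhd fun q => ?_)
  have := finite_nbhdIn (U := U \ {q.1.1, q.1.2}) hfin (finite_range q.2).toFinset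
  rwa [Finite.coe_toFinset] at this

theorem measurableSet_adj_hallOn_sdiff_pair (hG : MeasurableSet {p : X × X | G.Adj p.1 p.2})
    (hfin : ∀ x, (G.neighborSet x).Finite) (hU : MeasurableSet U) (hHall : HallOn G U) :
    MeasurableSet {q : X × X | G.Adj q.1 q.2 ∧ HallOn G (U \ {q.1, q.2})} := by
  have heq : {q : X × X | G.Adj q.1 q.2 ∧ HallOn G (U \ {q.1, q.2})} =
      {q : X × X | G.Adj q.1 q.2} ∩ ⋂ r : ℕ, {q : X × X | ∀ F : Finset X,
        (∀ v ∈ F, v ∈ U \ {q.1, q.2} ∧ G.edist q.1 v ≤ r) →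
          (F : Set X).ncard ≤ (nbhdIn G (U \ {q.1, q.2}) F).ncard} := by
    ext q
    simp only [mem_inter_iff, mem_iInter, mem_ofPred_eq, ncard_coe_finset]
    exact and_congr_right fun hq => hallOn_sdiff_pair_iff hfin hHall hq
  have hball (r : ℕ) : MeasurableSet {q : (X × X) × X | G.edist q.1.1 q.2 ≤ r} := by
    have hpair : Measurable fun q : (X × X) × X => (q.1.1, q.2) := by fun_prop
    exact hpair (measurableSet_edist_le hG hfin r)
  rw [heq]
  exact hG.inter <| .iInter fun r => measurableSet_forall_finset
    (P := fun (q : X × X) v => v ∈ U \ {q.1, q.2} ∧ G.edist q.1 v ≤ r)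
    (Q := fun (q : X × X) F => F.ncard ≤ (nbhdIn G (U \ {q.1, q.2}) F).ncard)
    ((measurableSet_mem_sdiff_pair hU).inter (hball r))
    (fun q => (finite_edist_le hfin r q.1).subset fun v hv => hv.2)
    (measurableSet_ncard_range_le_ncard_nbhdIn hG hfin hU)

theorem measurableSet_verts_of_isMatching (hfin : ∀ x, (G.neighborSet x).Finite)
    (hM : M.IsMatching) (hMeas : MeasurableSet {p : X × X | M.Adj p.1 p.2}) :
    MeasurableSet M.verts := by
  rw [← hM.support_eq_verts]
  exact measurableSet_exists hMeas fun x => (hfin x).subset fun _ hxy => hxy.adj_sub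

/-- A Borel matching of `G` whose uncovered vertices still satisfy Hall's condition, with surplus
factor `1 + ε` for square-connected sets of at least `f` vertices. These are the partial matchings
of the construction. -/
structure IsExtendable (M : G.Subgraph) (f : ℕ) (ε : ℝ) : Prop where
  isMatching : M.IsMatching
  measurableSet_adj : MeasurableSet {p : X × X | M.Adj p.1 p.2}
  hallOn : HallOn G M.vertsᶜ
  expandsOn : ExpandsOn G M.vertsᶜ f ε

theorem IsExtendable.exists_safe_partner (hG : MeasurableSet {p : X × X | G.Adj p.1 p.2})
    (hfin : ∀ x, (G.neighborSet x).Finite) {B₀ B₁ : Set X} (hbip : G.IsBipartiteWith B₀ B₁)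
    (hM : IsExtendable M f ε) (hD : MeasurableSet D) :
    ∃ p : X → X, MeasurableSet {q : X × X | q.1 ∈ D \ M.verts ∧ p q.1 = q.2} ∧
      ∀ x ∈ D \ M.verts,
        p x ∈ M.vertsᶜ ∧ G.Adj x (p x) ∧ HallOn G (M.vertsᶜ \ {x, p x}) := by
  have hverts := measurableSet_verts_of_isMatching hfin hM.isMatching hM.measurableSet_adj
  have hsafe : MeasurableSet {q : X × X | q.1 ∈ D \ M.verts ∧ q.2 ∈ M.vertsᶜ ∧
      G.Adj q.1 q.2 ∧ HallOn G (M.vertsᶜ \ {q.1, q.2})} :=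
    (measurable_fst (hD.diff hverts)).inter <| (measurable_snd hverts.compl).inter <|
      measurableSet_adj_hallOn_sdiff_pair hG hfin hverts.compl hM.hallOn
  obtain ⟨R, hRmeas, hR, huniq⟩ := exists_measurableSet_uniformization
    (P := fun x y => x ∈ D \ M.verts ∧ y ∈ M.vertsᶜ ∧ G.Adj x y ∧ HallOn G (M.vertsᶜ \ {x, y}))
    hsafe fun x => (hfin x).subset fun _ hxy => hxy.2.2.1
  have hex (x) (hx : x ∈ D \ M.verts) : ∃! y, R x y := huniq x <| by
    obtain ⟨y, hy, hxy⟩ := hM.hallOn.exists_adj hfin hbip hx.2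
    exact ⟨y, hx, hy, hxy⟩
  choose! p hp using fun x hx => (hex x hx).exists
  refine ⟨p, ?_, fun x hx => (hR x (p x) (hp x hx)).2⟩
  convert hRmeas using 1
  ext ⟨x, y⟩
  constructor
  · rintro ⟨hx, rfl : p x = y⟩
    exact hp x hx
  · intro hxy
    have hx := (hR x y hxy).1
    exact ⟨hx, (hex x hx).unique (hp x hx) hxy⟩

theorem IsExtendable.exists_le_subset_verts (hG : MeasurableSet {p : X × X | G.Adj p.1 p.2})
    (hfin : ∀ x, (G.neighborSet x).Finite) {B₀ B₁ : Set X} (hbip : G.IsBipartiteWith B₀ B₁)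
    (hM : IsExtendable M f₀ ε) (hf : f₀ ≤ f) (hε : 0 ≤ ε) (hεf : 4 ≤ ε * f)
    (hD : MeasurableSet D) (hsparse : IsSparse G (4 * f) D) :
    ∃ M' : G.Subgraph, M ≤ M' ∧ D ⊆ M'.verts ∧ IsExtendable M' f (ε / 2) := by
  obtain ⟨p, hpmeas, hp⟩ := hM.exists_safe_partner hG hfin hbip hD
  set A := D \ M.verts
  have hA : IsSparse G (4 * f) A := hsparse.mono le_rfl sdiff_subset
  have hAadj (a) (ha : a ∈ A) : G.Adj a (p a) := (hp a ha).2.1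
  have hfpos : 0 < f := Nat.pos_of_ne_zero fun h => by norm_num [h] at hεf
  have hN : (pairing G A p hAadj).IsMatching :=
    isMatching_pairing hAadj (hA.mono (by omega) subset_rfl)
  have hdisj : Disjoint M.verts (A ∪ p '' A) := by
    refine disjoint_left.2 fun v hv => ?_
    rintro (hvA | ⟨a, ha, rfl⟩)
    exacts [hvA.2 hv, (hp a ha).1 hv]
  have hcompl : (M ⊔ pairing G A p hAadj).vertsᶜ = M.vertsᶜ \ (A ∪ p '' A) := compl_union _ _
  have hexp : ExpandsOn G (M.vertsᶜ \ (A ∪ p '' A)) f (ε / 2) :=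
    hM.expandsOn.sdiff hfin hf hε hεf hAadj hA
  refine ⟨M ⊔ pairing G A p hAadj, le_sup_left, fun x hx => ?_, ?_, ?_, ?_, ?_⟩
  · by_cases hxM : x ∈ M.verts
    exacts [.inl hxM, .inr (.inl ⟨hx, hxM⟩)]
  · exact hM.isMatching.sup hN (by rwa [hM.isMatching.support_eq_verts, hN.support_eq_verts])
  · exact hM.measurableSet_adj.union (hpmeas.union (measurable_swap hpmeas))
  · rw [hcompl]
    exact hM.hallOn.sdiff hfin hexp (by positivity) hAadj (fun a ha => (hp a ha).2.2) hA
  · rwa [hcompl]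

end BorelMatching

section Category

open Set Topology TopologicalSpace

variable {X Y : Type*} [TopologicalSpace X] [SecondCountableTopology X]

theorem mem_residual_of_forall_not_isMeagre_inter {B : Set X} (hB : BaireMeasurableSet B)
    (h : ∀ U ∈ countableBasis X, ¬ IsMeagre U → ¬ IsMeagre (U ∩ B)) : B ∈ residual X := by
  obtain ⟨V, hV, hBV⟩ := hB.compl.residualEq_isOpen
  have hVB : IsMeagre (V ∩ B) := by
    filter_upwards [Filter.eventuallyEq_set.1 hBV] with x hx hxVB
    exact hx.2 hxVB.1 hxVB.2
  have hVmeagre : IsMeagre V := by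
    rw [(isBasis_countableBasis X).open_eq_sUnion' hV, sUnion_eq_biUnion]
    refine isMeagre_biUnion ((countable_countableBasis X).mono fun U hU => hU.1) fun U hU => ?_
    exact not_imp_not.1 (h U hU.1) (hVB.mono (inter_subset_inter_left B hU.2))
  filter_upwards [Filter.eventuallyEq_set.1 hBV, hVmeagre] with x hx hxV
  exact not_not.1 fun hxB => hxV (hx.1 hxB)

/-- A form of the Kuratowski–Ulam theorem: the sections `T x` need not be those of a Baire
measurable subset of the product. -/
theorem residual_forall_residual_mem_of_isOpen_of_dense [TopologicalSpace Y]
    [SecondCountableTopology Y] {T : X → Set Y} (hopen : ∀ x, IsOpen (T x))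
    (hdense : ∀ x, Dense (T x)) (hmeas : ∀ y, BaireMeasurableSet {x | y ∈ T x}) :
    ∀ᶠ y in residual Y, ∀ᶠ x in residual X, y ∈ T x := by
  let O (U : Set X) : Set Y :=
    ⋃₀ {V | V ∈ countableBasis Y ∧ ¬ IsMeagre (U ∩ {x | V ⊆ T x})}
  have hOopen (U) : IsOpen (O U) := isOpen_sUnion fun V hV => isOpen_of_mem_countableBasis hV.1
  have hOdense (U) (hU : ¬ IsMeagre U) : Dense (O U) := by
    refine dense_iff_inter_open.2 fun W hW hWne => ?_
    let B : Set (Set Y) := {V ∈ countableBasis Y | V.Nonempty ∧ V ⊆ W}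
    have hcover : U ⊆ ⋃ V ∈ B, U ∩ {x | V ⊆ T x} := fun x hx => by
      obtain ⟨y, hyW, hyT⟩ := (hdense x).inter_open_nonempty W hW hWne
      obtain ⟨V, hV, hyV, hVsub⟩ := (isBasis_countableBasis Y).exists_subset_of_mem_open
        (mem_inter hyW hyT) (hW.inter (hopen x))
      exact mem_biUnion (show V ∈ B from ⟨hV, ⟨y, hyV⟩, hVsub.trans inter_subset_left⟩)
        ⟨hx, hVsub.trans inter_subset_right⟩
    obtain ⟨V, ⟨hV, ⟨y, hy⟩, hVW⟩, hVmeagre⟩ := exists_of_not_isMeagre_biUnion (I := B)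
      ((countable_countableBasis Y).mono fun V hV => hV.1) (mt (IsMeagre.mono hcover) hU)
    exact ⟨y, hVW hy, V, ⟨hV, hVmeagre⟩, hy⟩
  have hO : ∀ᶠ y in residual Y, ∀ U ∈ {U ∈ countableBasis X | ¬ IsMeagre U}, y ∈ O U :=
    (eventually_countable_ball ((countable_countableBasis X).mono fun U hU => hU.1)).2
      fun U hU => residual_of_dense_open (hOopen U) (hOdense U hU.2)
  filter_upwards [hO] with y hy
  refine mem_residual_of_forall_not_isMeagre_inter (hmeas y) fun U hU hUmeagre => ?_
  obtain ⟨V, ⟨-, hV⟩, hyV⟩ := hy U ⟨hU, hUmeagre⟩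
  exact mt (IsMeagre.mono (inter_subset_inter_right U fun x (hx : V ⊆ T x) => hx hyV)) hV

end Category

section GenericCover

open Set Topology TopologicalSpace

variable {X : Type*} {G : SimpleGraph X}

theorem isOpen_setOf_exists_mem_apply {C : ℕ → ℕ → Set X} (y : X) :
    IsOpen {s : ℕ → ℕ | ∃ n, y ∈ C n (s n)} := by
  simp only [← iUnion_ofPred]
  exact isOpen_iUnion fun n => (isOpen_discrete {k | y ∈ C n k}).preimage
    (continuous_apply (A := fun _ => ℕ) n)

theorem dense_setOf_exists_mem_apply {C : ℕ → ℕ → Set X} {y : X} (hC : ∀ n, ∃ k, y ∈ C n k) :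
    Dense {s : ℕ → ℕ | ∃ n, y ∈ C n (s n)} := by
  choose k hk using hC
  intro s
  refine mem_closure_of_tendsto (f := fun n => Function.update s n (k n))
    (b := Filter.atTop) (tendsto_pi_nhds.2 fun m => ?_)
    (.of_forall fun n => ⟨n, by simpa using hk n⟩)
  refine tendsto_const_nhds.congr' ?_
  filter_upwards [Filter.eventually_gt_atTop m] with n hn
  exact (Function.update_of_ne hn.ne _ _).symm

theorem exists_measurable_cover_isSparse [MeasurableSpace X] [StandardBorelSpace X]
    (hG : MeasurableSet {p : X × X | G.Adj p.1 p.2})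
    (hfin : ∀ x, (G.neighborSet x).Finite) (r : ℕ) :
    ∃ C : ℕ → Set X, (∀ k, MeasurableSet (C k)) ∧ (∀ k, IsSparse G r (C k)) ∧ ⋃ k, C k = univ := by
  obtain ⟨e, he⟩ := MeasureTheory.exists_measurableEmbedding_real X
  have hbasis := isBasis_countableBasis ℝ
  obtain ⟨V₀, hV₀, -⟩ := hbasis.exists_subset_of_mem_open (mem_univ 0) isOpen_univ
  have : Nonempty (countableBasis ℝ) := ⟨V₀, hV₀⟩
  obtain ⟨V, hV⟩ := exists_surjective_nat (countableBasis ℝ)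
  have hVmeas (k) : MeasurableSet (V k : Set ℝ) := (hbasis.isOpen (V k).2).measurableSet
  refine ⟨fun k => {x | e x ∈ (V k : Set ℝ) ∧ ∀ y, G.edist x y ≤ r → e y ∉ (V k : Set ℝ) ∨ x = y},
    fun k => ?_, fun k x hx y hy hxy => ?_, ?_⟩
  · refine (he.measurable (hVmeas k)).inter (measurableSet_forall_imp
      (Q := fun x y => e y ∉ (V k : Set ℝ) ∨ x = y)
      (measurableSet_edist_le hG hfin r) (finite_edist_le hfin r) (.union ?_ ?_))
    · exact (he.measurable.comp measurable_snd (hVmeas k)).compl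
    · exact measurableSet_eq_fun measurable_fst measurable_snd
  · exact lt_of_not_ge fun h => hxy ((hx.2 y h).resolve_left (not_not.2 hy.1))
  · refine eq_univ_of_forall fun x => ?_
    have hfinite : (e '' ({y | G.edist x y ≤ r} \ {x})).Finite :=
      ((finite_edist_le hfin r x).sdiff).image e
    have hx : e x ∉ e '' ({y | G.edist x y ≤ r} \ {x}) := by
      rintro ⟨y, hy, hyx⟩
      exact hy.2 (he.injective hyx)
    obtain ⟨W, hW, hxW, hWsub⟩ :=
      hbasis.exists_subset_of_mem_open hx hfinite.isClosed.isOpen_compl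
    obtain ⟨k, hk⟩ := hV ⟨W, hW⟩
    refine mem_iUnion.2 ⟨k, ?_⟩
    simp only [hk, mem_ofPred_eq]
    refine ⟨hxW, fun y hxy => or_iff_not_imp_right.2 fun hne hyW => ?_⟩
    exact hWsub hyW (mem_image_of_mem e ⟨hxy, Ne.symm hne⟩)

theorem exists_residual_forall_reachable_mem_iUnion [TopologicalSpace X]
    [SecondCountableTopology X] [MeasurableSpace X] [BorelSpace X] [StandardBorelSpace X]
    (hG : MeasurableSet {p : X × X | G.Adj p.1 p.2})
    (hfin : ∀ x, (G.neighborSet x).Finite) {C : ℕ → ℕ → Set X}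
    (hC : ∀ n k, MeasurableSet (C n k)) (hcover : ∀ n, ⋃ k, C n k = univ) :
    ∃ s : ℕ → ℕ, ∀ᶠ x in residual X, ∀ y, G.Reachable x y → y ∈ ⋃ n, C n (s n) := by
  let S (y : X) : Set (ℕ → ℕ) := {s | ∃ n, y ∈ C n (s n)}
  have hS (y) : IsOpen (S y) := isOpen_setOf_exists_mem_apply y
  have hball (r : ℕ) : ∀ᶠ s in residual (ℕ → ℕ), ∀ᶠ x in residual X,
      s ∈ ⋂ y ∈ {y | G.edist x y ≤ r}, S y := by
    refine residual_forall_residual_mem_of_isOpen_of_dense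
      (fun x => (finite_edist_le hfin r x).isOpen_biInter fun y _ => hS y)
      (fun x => dense_biInter_of_isOpen (fun y _ => hS y) (finite_edist_le hfin r x).countable
        fun y _ => dense_setOf_exists_mem_apply fun n => mem_iUnion.1 (hcover n ▸ mem_univ y))
      fun s => ?_
    have hmem : MeasurableSet {y | s ∈ S y} := by
      convert MeasurableSet.iUnion fun n => hC n (s n) using 1
      ext y
      simp [S]
    simp only [mem_iInter₂]
    exact (measurableSet_forall_imp (Q := fun _ y => s ∈ S y) (measurableSet_edist_le hG hfin r)
      (finite_edist_le hfin r) (measurable_snd hmem)).baireMeasurableSet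
  obtain ⟨s, hs⟩ := (dense_of_mem_residual (eventually_countable_forall.2 hball)).nonempty
  refine ⟨s, ?_⟩
  filter_upwards [eventually_countable_forall.2 hs] with x hx y hxy
  obtain ⟨r, hr⟩ := reachable_iff_exists_edist_le.1 hxy
  exact mem_iUnion.2 (mem_iInter₂.1 (hx r) y hr)

end GenericCover

section Construction

open Set

variable {X : Type*} {G : SimpleGraph X} {B₀ B₁ : Set X} {ε : ℝ}

theorem one_add_mul_card_le_ncard_nbhdIn_univ (hfin : ∀ x, (G.neighborSet x).Finite)
    (hbip : G.IsBipartiteWith B₀ B₁) (hcover : B₀ ∪ B₁ = univ)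
    (hHall : ∀ F : Finset X, ((F : Set X) ⊆ B₀ ∨ (F : Set X) ⊆ B₁) →
      (1 + ε) * (F.card : ℝ) ≤ ((graphNbhd G (F : Set X)).ncard : ℝ)) (F : Finset X) :
    (1 + ε) * F.card ≤ (nbhdIn G univ F).ncard := by
  classical
  set F₀ := F.filter (· ∈ B₀)
  set F₁ := F.filter (· ∉ B₀)
  have hF₀ : (F₀ : Set X) ⊆ B₀ := fun x hx => (Finset.mem_filter.1 hx).2
  have hF₁ : (F₁ : Set X) ⊆ B₁ := fun x hx =>
    (hcover.symm ▸ mem_univ x : x ∈ B₀ ∪ B₁).resolve_left (Finset.mem_filter.1 hx).2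
  have hsub {S : Finset X} (hS : S ⊆ F) : graphNbhd G S ⊆ nbhdIn G univ F :=
    fun y ⟨_, x, hx, hxy⟩ => ⟨mem_univ y, x, hS hx, hxy⟩
  have hsub₀ : graphNbhd G F₀ ⊆ nbhdIn G univ F := hsub (Finset.filter_subset _ _)
  have hsub₁ : graphNbhd G F₁ ⊆ nbhdIn G univ F := hsub (Finset.filter_subset _ _)
  have hdisj : Disjoint (graphNbhd G F₀) (graphNbhd G F₁) :=
    disjoint_left.2 fun y ⟨_, a, ha, hay⟩ ⟨_, b, hb, hby⟩ =>
      disjoint_left.1 hbip.disjoint (hbip.symm.mem_of_mem_adj (hF₁ hb) hby)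
        (hbip.mem_of_mem_adj (hF₀ ha) hay)
  have hnbhd := finite_nbhdIn (U := univ) hfin F
  calc (1 + ε) * (F.card : ℝ) = (1 + ε) * F₀.card + (1 + ε) * F₁.card := by
        rw [← Finset.card_filter_add_card_filter_not (s := F) (· ∈ B₀)]
        push_cast
        ring
    _ ≤ (graphNbhd G F₀).ncard + (graphNbhd G F₁).ncard :=
        add_le_add (hHall F₀ (.inl hF₀)) (hHall F₁ (.inr hF₁))
    _ = (graphNbhd G F₀ ∪ graphNbhd G F₁).ncard := by
        rw [ncard_union_eq hdisj (hnbhd.subset hsub₀) (hnbhd.subset hsub₁), Nat.cast_add]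
    _ ≤ (nbhdIn G univ F).ncard := by
        exact_mod_cast ncard_le_ncard (union_subset hsub₀ hsub₁) hnbhd

theorem isExtendable_bot [MeasurableSpace X]
    (hHall : ∀ F : Finset X, (1 + ε) * F.card ≤ (nbhdIn G univ F).ncard) (hε : 0 ≤ ε) (f : ℕ) :
    IsExtendable (⊥ : G.Subgraph) f ε where
  isMatching := fun v hv => hv.elim
  measurableSet_adj := by simp
  hallOn F _ := by
    have : (F.card : ℝ) ≤ (1 + ε) * F.card :=
      le_mul_of_one_le_left (Nat.cast_nonneg _) (le_add_of_nonneg_right hε)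
    simpa using this.trans (hHall F)
  expandsOn F _ _ _ := by simpa using hHall F

theorem exists_monotone_le_mul (hε : 0 < ε) {c : ℝ} (hc : 0 ≤ c) :
    ∃ f : ℕ → ℕ, Monotone f ∧ ∀ n, c ≤ ε / 2 ^ n * f (n + 1) := by
  have hmono : Monotone fun n : ℕ => ⌈c / ε * 2 ^ n⌉₊ := fun m n hmn =>
    Nat.ceil_mono (by gcongr; exact one_le_two)
  refine ⟨_, hmono, fun n => ?_⟩
  calc c = ε / 2 ^ n * (c / ε * 2 ^ n) := by field_simp
    _ ≤ ε / 2 ^ n * ⌈c / ε * 2 ^ n⌉₊ := by gcongr; exact Nat.le_ceil _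
    _ ≤ ε / 2 ^ n * ⌈c / ε * 2 ^ (n + 1)⌉₊ :=
        mul_le_mul_of_nonneg_left (Nat.cast_le.2 (hmono n.le_succ)) (by positivity)

theorem isMatching_iSup_of_directed {ι : Type*} {M : ι → G.Subgraph}
    (hM : ∀ i, (M i).IsMatching) (hdir : Directed (· ≤ ·) M) : (⨆ i, M i).IsMatching := by
  intro v hv
  rw [SimpleGraph.Subgraph.verts_iSup] at hv
  obtain ⟨i, hi⟩ := mem_iUnion.1 hv
  obtain ⟨w, hw⟩ := (hM i hi).exists
  refine ⟨w, SimpleGraph.Subgraph.iSup_adj.2 ⟨i, hw⟩, fun z hz => ?_⟩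
  obtain ⟨j, hj⟩ := SimpleGraph.Subgraph.iSup_adj.1 hz
  obtain ⟨k, hik, hjk⟩ := hdir i j
  exact (hM k).eq_of_adj_left (hjk.2 hj) (hik.2 hw)

theorem exists_monotone_isExtendable [MeasurableSpace X] [StandardBorelSpace X]
    (hG : MeasurableSet {p : X × X | G.Adj p.1 p.2}) (hfin : ∀ x, (G.neighborSet x).Finite)
    (hbip : G.IsBipartiteWith B₀ B₁) {f : ℕ → ℕ} (hf : Monotone f) (hε : 0 ≤ ε)
    (hεf : ∀ n, 4 ≤ ε / 2 ^ n * f (n + 1)) (h₀ : IsExtendable (⊥ : G.Subgraph) (f 0) ε)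
    {D : ℕ → Set X} (hD : ∀ n, MeasurableSet (D n))
    (hsparse : ∀ n, IsSparse G (4 * f (n + 1)) (D n)) :
    ∃ M : ℕ → G.Subgraph, Monotone M ∧ (∀ n, D n ⊆ (M (n + 1)).verts) ∧
      ∀ n, IsExtendable (M n) (f n) (ε / 2 ^ n) := by
  have hstep (n : ℕ) (M : G.Subgraph) (hM : IsExtendable M (f n) (ε / 2 ^ n)) :=
    hM.exists_le_subset_verts hG hfin hbip (hf n.le_succ) (by positivity) (hεf n) (hD n)
      (hsparse n)
  choose! next hle hcover hext using hstep
  let M (n : ℕ) : G.Subgraph := n.rec ⊥ next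
  have hM (n : ℕ) : IsExtendable (M n) (f n) (ε / 2 ^ n) := by
    induction n with
    | zero => exact (div_one ε).symm ▸ h₀
    | succ n ih => simpa only [pow_succ, div_div] using hext n (M n) ih
  exact ⟨M, monotone_nat_of_le_succ fun n => hle n _ (hM n), fun n => hcover n _ (hM n), hM⟩

theorem exists_borel_isMatching_iUnion_subset_verts [MeasurableSpace X] [StandardBorelSpace X]
    (hG : MeasurableSet {p : X × X | G.Adj p.1 p.2}) (hfin : ∀ x, (G.neighborSet x).Finite)
    (hbip : G.IsBipartiteWith B₀ B₁) {f : ℕ → ℕ} (hf : Monotone f) (hε : 0 ≤ ε)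
    (hεf : ∀ n, 4 ≤ ε / 2 ^ n * f (n + 1)) (h₀ : IsExtendable (⊥ : G.Subgraph) (f 0) ε)
    {D : ℕ → Set X} (hD : ∀ n, MeasurableSet (D n))
    (hsparse : ∀ n, IsSparse G (4 * f (n + 1)) (D n)) :
    ∃ M : G.Subgraph, M.IsMatching ∧ MeasurableSet {p : X × X | M.Adj p.1 p.2} ∧
      ⋃ n, D n ⊆ M.verts := by
  obtain ⟨M, hmono, hcover, hM⟩ :=
    exists_monotone_isExtendable hG hfin hbip hf hε hεf h₀ hD hsparse
  refine ⟨⨆ n, M n, isMatching_iSup_of_directed (fun n => (hM n).isMatching) hmono.directed_le,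
    ?_, iUnion_subset fun n => (hcover n).trans (le_iSup M (n + 1)).1⟩
  simp only [SimpleGraph.Subgraph.iSup_adj, ← iUnion_ofPred]
  exact .iUnion fun n => (hM n).measurableSet_adj

theorem isPerfectMatchingOn_of_isMatching {M : G.Subgraph} (hM : M.IsMatching) {A : Set X}
    (hA : ∀ x y, G.Adj x y → (x ∈ A ↔ y ∈ A)) (hAM : A ⊆ M.verts) :
    IsPerfectMatchingOn G A {p | p.1 ∈ A ∧ M.Adj p.1 p.2} := by
  refine ⟨fun p ⟨hp, hadj⟩ => ⟨hp, (hA _ _ hadj.adj_sub).1 hp, hadj.adj_sub⟩, fun x y => ?_,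
    fun x hx => ?_⟩
  · simp only [mem_ofPred_eq, M.adj_comm x y]
    exact and_congr_left fun hyx => (hA y x hyx.adj_sub).symm
  · simpa [hx] using hM (hAM hx)

end Construction

theorem bairely_hall_general {X : Type*} [TopologicalSpace X] [SecondCountableTopology X]
    [MeasurableSpace X] [BorelSpace X] [StandardBorelSpace X]
    (G : SimpleGraph X)
    (hGBorel : MeasurableSet {p : X × X | G.Adj p.1 p.2})
    (hlocfin : ∀ x : X, (G.neighborSet x).Finite)
    (B₀ B₁ : Set X) (hcover : B₀ ∪ B₁ = Set.univ) (hdisj : Disjoint B₀ B₁)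
    (hbip : ∀ x y : X, G.Adj x y → (x ∈ B₀ ∧ y ∈ B₁) ∨ (x ∈ B₁ ∧ y ∈ B₀))
    (ε : ℝ) (hε : 0 < ε)
    (hHall : ∀ F : Finset X, ((F : Set X) ⊆ B₀ ∨ (F : Set X) ⊆ B₁) →
      (1 + ε) * (F.card : ℝ) ≤ ((graphNbhd G (F : Set X)).ncard : ℝ)) :
    ∃ A : Set X, MeasurableSet A ∧ A ∈ residual X ∧
      (∀ x y : X, G.Adj x y → (x ∈ A ↔ y ∈ A)) ∧
      ∃ M : Set (X × X), MeasurableSet M ∧ IsPerfectMatchingOn G A M := by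
  have hG : G.IsBipartiteWith B₀ B₁ := ⟨hdisj, hbip⟩
  have hexp := one_add_mul_card_le_ncard_nbhdIn_univ hlocfin hG hcover hHall
  obtain ⟨f, hf, hεf⟩ := exists_monotone_le_mul hε zero_le_four
  choose C hCmeas hCsparse hCcover using fun n =>
    exists_measurable_cover_isSparse hGBorel hlocfin (4 * f (n + 1))
  obtain ⟨s, hs⟩ := exists_residual_forall_reachable_mem_iUnion hGBorel hlocfin hCmeas hCcover
  obtain ⟨M, hM, hMmeas, hDM⟩ := exists_borel_isMatching_iUnion_subset_verts hGBorel hlocfin hG hf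
    hε.le hεf (isExtendable_bot hexp hε.le (f 0)) (fun n => hCmeas n (s n))
    (fun n => hCsparse n (s n))
  set A : Set X := {x | ∀ y, G.Reachable x y → y ∈ ⋃ n, C n (s n)}
  have hA : MeasurableSet A := measurableSet_forall_reachable_mem hGBorel hlocfin
    (.iUnion fun n => hCmeas n (s n))
  have hinv (x y) (hxy : G.Adj x y) : x ∈ A ↔ y ∈ A := forall_congr' fun z =>
    imp_congr_left ⟨hxy.reachable.symm.trans, hxy.reachable.trans⟩
  exact ⟨A, hA, hs, hinv, _, (measurable_fst hA).inter hMmeas,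
    isPerfectMatchingOn_of_isMatching hM hinv fun x hx => hDM (hx x .rfl)⟩

/-- **Theorem (Marks–Unger).** If `G` is a locally finite bipartite Borel graph on a Polish
space with bipartition `{B₀, B₁}` and there is `ε > 0` such that `|N_G(F)| ≥ (1+ε)|F|` for
every finite subset `F` of `B₀` or of `B₁`, then there is a comeager `G`-invariant Borel set
`A` such that `G ↾ A` has a Borel perfect matching. -/
theorem bairely_hall {X : Type*} [TopologicalSpace X] [PolishSpace X]
    [MeasurableSpace X] [BorelSpace X]
    (G : SimpleGraph X)
    (hGBorel : MeasurableSet {p : X × X | G.Adj p.1 p.2})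
    (hlocfin : ∀ x : X, (G.neighborSet x).Finite)
    (B₀ B₁ : Set X) (hcover : B₀ ∪ B₁ = Set.univ) (hdisj : Disjoint B₀ B₁)
    (hbip : ∀ x y : X, G.Adj x y → (x ∈ B₀ ∧ y ∈ B₁) ∨ (x ∈ B₁ ∧ y ∈ B₀))
    (ε : ℝ) (hε : 0 < ε)
    (hHall : ∀ F : Finset X, ((F : Set X) ⊆ B₀ ∨ (F : Set X) ⊆ B₁) →
      (1 + ε) * (F.card : ℝ) ≤ ((graphNbhd G (F : Set X)).ncard : ℝ)) :
    ∃ A : Set X, MeasurableSet A ∧ A ∈ residual X ∧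
      (∀ x y : X, G.Adj x y → (x ∈ A ↔ y ∈ A)) ∧
      ∃ M : Set (X × X), MeasurableSet M ∧ IsPerfectMatchingOn G A M :=
  bairely_hall_general G hGBorel hlocfin B₀ B₁ hcover hdisj hbip ε hε hHall
end

section
/- Suppose a group Γ acts on a Polish space X by Borel automorphisms and this action has a paradoxical decomposition. Then the action has a paradoxical decomposition in which every piece has the Baire property. -/
open scoped Pointwise

/-- The families `A₁,…,Aₙ, B₁,…,B_m` together with group elements `α₁,…,αₙ, β₁,…,β_m` form a
paradoxical decomposition of the action of `Γ` on `X`: the pieces partition `X`, the sets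
`αᵢ • Aᵢ` are pairwise disjoint with union `X`, and the sets `βⱼ • Bⱼ` are pairwise disjoint
with union `X`. -/
def IsParadoxicalDecomposition {Γ X : Type*} [Group Γ] [MulAction Γ X]
    {n m : ℕ} (A : Fin n → Set X) (B : Fin m → Set X) (α : Fin n → Γ) (β : Fin m → Γ) : Prop :=
  (∀ i j, i ≠ j → Disjoint (A i) (A j)) ∧
  (∀ i j, i ≠ j → Disjoint (B i) (B j)) ∧
  (∀ i j, Disjoint (A i) (B j)) ∧
  ((⋃ i, A i) ∪ (⋃ j, B j)) = Set.univ ∧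
  (∀ i j, i ≠ j → Disjoint (α i • A i) (α j • A j)) ∧
  (∀ i j, i ≠ j → Disjoint (β i • B i) (β j • B j)) ∧
  (⋃ i, α i • A i) = Set.univ ∧
  (⋃ j, β j • B j) = Set.univ

/-!
The argument is due to Marks and Unger. A paradoxical decomposition amounts to an injection
`(x, b) ↦ c (x, b) • x` from `X × Bool` to `X` with `c` taking finitely many values: it yields a
decomposition by the Schröder–Bernstein construction, which preserves measurability. So consider
the bipartite graph that joins both copies of `x` to the translates of `x` by a finite set `S`. As
composing the given injection with itself shows, `S` can be chosen so that every finite set `F` of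
vertices has at least `2 * #F` neighbours. Such slack allows a matching to be built measurably in
stages. At each stage a sparse measurable set `A` is matched, each `a ∈ A` in a way that preserves
Hall's condition on its own component. If before the stage linked sets `F` have `#F + #F / k`
unused neighbours, then afterwards they have at least `#F + #F / (2 * k)`: a linked set close to two
or more points of `A`, which are far apart, must be large compared to the number of these points.
Finally, generic sparse sets exhaust a comeager invariant Borel set `C`, by the Baire property of
Borel sets; off `C`, where any set has the Baire property, the original injection is kept.
-/

open Function Set Topology TopologicalSpace
open scoped Classical Finset

section Matching

variable {V W : Type*} {N : V → Finset W} {k r R : ℕ} {P A : Set V} {U : Set W} {F : Finset V}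

/-- The neighbours of a vertex in the bipartite graph `N` that are not yet used, i.e. lie outside
`U`. The free neighbours of a finite set `F` form `F.biUnion (freeNbrs N U)`. -/
noncomputable def freeNbrs (N : V → Finset W) (U : Set W) (v : V) : Finset W :=
  {w ∈ N v | w ∉ U}

lemma mem_freeNbrs {v : V} {w : W} : w ∈ freeNbrs N U v ↔ w ∈ N v ∧ w ∉ U := by
  simp only [freeNbrs, Finset.mem_filter]

/-- Hall's condition for matching the vertices in `P` into the complement of `U`. -/
def HallCondition (N : V → Finset W) (P : Set V) (U : Set W) : Prop :=
  ∀ F : Finset V, ↑F ⊆ P → #F ≤ #(F.biUnion (freeNbrs N U))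

/-- `F` is connected in the graph on `V` that joins two vertices with a common neighbour; stated
through cuts: no proper nonempty part of `F` shares no neighbour with the rest of `F`. -/
def IsLinked (N : V → Finset W) (F : Finset V) : Prop :=
  ∀ F₁ ⊆ F, F₁.Nonempty → (∀ v ∈ F₁, ∀ u ∈ F, u ∉ F₁ → Disjoint (N v) (N u)) → F₁ = F

/-- Linked finite sets of unmatched vertices have more free neighbours than Hall's condition asks
for, by a factor `1 + 1 / k` up to rounding. -/
def Expands (N : V → Finset W) (k : ℕ) (P : Set V) (U : Set W) : Prop :=
  ∀ F : Finset V, ↑F ⊆ P → IsLinked N F → #F + #F / k ≤ #(F.biUnion (freeNbrs N U))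

theorem Expands.hallCondition (h : Expands N k P U) : HallCondition N P U := by
  intro F
  induction F using Finset.strongInduction with | H F ih
  intro hFP
  by_cases hlinked : IsLinked N F
  · exact (Nat.le_add_right _ _).trans (h F hFP hlinked)
  simp only [IsLinked, not_forall] at hlinked
  obtain ⟨F₁, hF₁F, hne, hcut, hneq⟩ := hlinked
  have hF₁ := ih F₁ (hF₁F.ssubset_of_ne hneq) ((Finset.coe_subset.2 hF₁F).trans hFP)
  have hF₂ := ih (F \ F₁) (Finset.sdiff_ssubset hF₁F hne)
    ((Finset.coe_subset.2 Finset.sdiff_subset).trans hFP)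
  have hdisj : Disjoint (F₁.biUnion (freeNbrs N U)) ((F \ F₁).biUnion (freeNbrs N U)) := by
    simp only [Finset.disjoint_biUnion_left, Finset.disjoint_biUnion_right, Finset.mem_sdiff]
    exact fun u hu v hv ↦
      (hcut v hv u hu.1 hu.2).mono (Finset.filter_subset _ _) (Finset.filter_subset _ _)
  calc #F = #F₁ + #(F \ F₁) := by rw [add_comm, Finset.card_sdiff_add_card_eq_card hF₁F]
    _ ≤ #(F₁.biUnion (freeNbrs N U)) + #((F \ F₁).biUnion (freeNbrs N U)) := by gcongr
    _ = #((F₁ ∪ F \ F₁).biUnion (freeNbrs N U)) := by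
      rw [Finset.union_biUnion, Finset.card_union_of_disjoint hdisj]
    _ = #(F.biUnion (freeNbrs N U)) := by rw [Finset.union_sdiff_of_subset hF₁F]

theorem hallCondition_iff_exists_injective :
    HallCondition N P U ↔ ∃ g : P → W, Injective g ∧ ∀ v : P, g v ∈ freeNbrs N U v := by
  rw [← Finset.all_card_le_biUnion_card_iff_exists_injective]
  refine ⟨fun h F ↦ ?_, fun h F hFP ↦ ?_⟩
  · have hF := h (F.map (Embedding.subtype _)) (by simp)
    rwa [Finset.card_map, Finset.map_eq_image, Finset.image_biUnion] at hF
  · lift F to Finset P using hFP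
    have hF := h F
    rwa [Finset.card_image_of_injective _ Subtype.val_injective, Finset.image_biUnion]

theorem HallCondition.exists_insert (h : HallCondition N P U) {a : V} (ha : a ∈ P) :
    ∃ y ∈ freeNbrs N U a, HallCondition N (P \ {a}) (insert y U) := by
  obtain ⟨g, hg, hgmem⟩ := hallCondition_iff_exists_injective.1 h
  refine ⟨g ⟨a, ha⟩, hgmem _, hallCondition_iff_exists_injective.2
    ⟨fun v ↦ g ⟨v, v.2.1⟩, fun v u hvu ↦ Subtype.ext (congrArg (Subtype.val : P → V) (hg hvu)),
      fun v ↦ mem_freeNbrs.2 ?_⟩⟩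
  have hne : g ⟨v, v.2.1⟩ ≠ g ⟨a, ha⟩ := fun heq ↦
    v.2.2 (congrArg (Subtype.val : P → V) (hg heq))
  have hv := mem_freeNbrs.1 (hgmem ⟨v, v.2.1⟩)
  exact ⟨hv.1, by simp [hne, hv.2]⟩

theorem HallCondition.mono (h : HallCondition N P U) {P' : Set V} (hP : P' ⊆ P) :
    HallCondition N P' U :=
  fun F hF ↦ h F (hF.trans hP)

theorem hallCondition_inter_range_iff {κ : Type*} (f : κ → V) : HallCondition N (P ∩ range f) U ↔
      ∀ K : Finset κ, (∀ k ∈ K, f k ∈ P) → #(K.image f) ≤ #(K.biUnion (freeNbrs N U ∘ f)) := by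
  refine ⟨fun h K hK ↦ (h (K.image f) ?_).trans_eq (by rw [Finset.image_biUnion, comp_def]),
    fun h F hF ↦ ?_⟩
  · rw [Finset.coe_image]
    exact subset_inter (image_subset_iff.2 hK) (image_subset_range _ _)
  · obtain ⟨K, -, rfl⟩ := Finset.subset_set_image_iff.1 (image_univ ▸ hF.trans inter_subset_right)
    rw [Finset.image_biUnion, ← comp_def]
    exact h K fun k hk ↦ (hF (Finset.mem_coe.2 (Finset.mem_image_of_mem f hk))).1

/-- The ball of radius `r` around `a` in the graph that joins vertices with a common neighbour;
disjointness of such balls expresses that a set is sparse. -/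
def linkBall (N : V → Finset W) (a : V) : ℕ → Set V
  | 0 => {a}
  | r + 1 => linkBall N a r ∪ {v | ∃ u ∈ linkBall N a r, ¬Disjoint (N u) (N v)}

/-- The connected component of `a` in the graph that joins vertices with a common neighbour. -/
def linkComponent (N : V → Finset W) (a : V) : Set V := ⋃ r, linkBall N a r

lemma linkBall_mono (a : V) : Monotone (linkBall N a) :=
  monotone_nat_of_le_succ fun _ ↦ subset_union_left

lemma mem_linkBall_one {a v : V} {w : W} (ha : w ∈ N a) (hv : w ∈ N v) : v ∈ linkBall N a 1 :=
  Or.inr ⟨a, rfl, Finset.not_disjoint_iff.2 ⟨w, ha, hv⟩⟩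

lemma IsLinked.exists_notMem_of_subset (hF : IsLinked N F) {B : Set V} {v₀ : V} (hv₀ : v₀ ∈ F)
    (hv₀B : v₀ ∈ B) (hFB : ¬ ↑F ⊆ B) : ∃ v ∈ F, v ∈ B ∧ ∃ u ∈ F, u ∉ B ∧ ¬Disjoint (N v) (N u) := by
  by_contra! hcut
  refine hFB fun u hu ↦ ?_
  have heq := hF {v ∈ F | v ∈ B} (Finset.filter_subset _ _) ⟨v₀, by simp [hv₀, hv₀B]⟩
    fun v hv u hu huB ↦ by
      simp only [Finset.mem_filter] at hv huB
      exact hcut v hv.1 hv.2 u hu fun h ↦ huB ⟨hu, h⟩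
  exact (Finset.mem_filter.1 (heq.symm ▸ hu : u ∈ {v ∈ F | v ∈ B})).2

lemma IsLinked.subset_linkComponent (hF : IsLinked N F) {a v : V} (hv : v ∈ F)
    (hva : v ∈ linkBall N a r) : ↑F ⊆ linkComponent N a := by
  by_contra hsub
  obtain ⟨u, -, hua, u', -, hu'a, hlink⟩ :=
    hF.exists_notMem_of_subset hv (mem_iUnion_of_mem r hva) hsub
  obtain ⟨s, hs⟩ := mem_iUnion.1 hua
  exact hu'a (mem_iUnion_of_mem (s + 1) (Or.inr ⟨u, hs, hlink⟩))

-- Each sphere between radius 1 and the point of `F` outside the ball contains a point of `F`.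
lemma IsLinked.le_card_filter_linkBall (hF : IsLinked N F) {a v : V} (hv : v ∈ F)
    (hva : v ∈ linkBall N a 1) (hr : 1 ≤ r) (hsub : ¬ ↑F ⊆ linkBall N a r) :
    r ≤ #{u ∈ F | u ∈ linkBall N a r} := by
  induction r, hr using Nat.le_induction with
  | base => exact Finset.card_pos.2 ⟨v, by simp [hv, hva]⟩
  | succ r hr ih =>
    have hsub' : ¬ ↑F ⊆ linkBall N a r := fun h ↦ hsub (h.trans (linkBall_mono a r.le_succ))
    obtain ⟨u, -, hua, u', hu', hu'a, hlink⟩ :=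
      hF.exists_notMem_of_subset hv (linkBall_mono a hr hva) hsub'
    refine (ih hsub').trans_lt (Finset.card_lt_card (Finset.ssubset_iff_of_subset ?_ |>.2
      ⟨u', ?_, ?_⟩))
    · exact Finset.monotone_filter_right F fun u _ hu ↦ linkBall_mono a r.le_succ hu
    · exact Finset.mem_filter.2 ⟨hu', Or.inr ⟨u, hua, hlink⟩⟩
    · exact fun h ↦ hu'a (Finset.mem_filter.1 h).2

lemma injOn_of_pairwiseDisjoint_linkBall (hA : A.PairwiseDisjoint (linkBall N · R)) (hR : 1 ≤ R)
    {y : V → W} (hy : ∀ a ∈ A, y a ∈ N a) : InjOn y A := by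
  intro a ha b hb hab
  by_contra hne
  exact (Set.disjoint_left.1 (hA ha hb hne))
    (linkBall_mono a hR (mem_linkBall_one (hy a ha) (hab ▸ hy b hb)))
    (linkBall_mono b R.zero_le rfl)

lemma IsLinked.card_mul_le_card (hF : IsLinked N F) (hR : 1 ≤ R) {G : Finset V}
    (hG : (G : Set V).PairwiseDisjoint (linkBall N · R)) (hcard : 2 ≤ #G)
    (hmeet : ∀ a ∈ G, ∃ v ∈ F, v ∈ linkBall N a 1) : #G * R ≤ #F := by
  have hball : ∀ a ∈ G, R ≤ #{v ∈ F | v ∈ linkBall N a R} := fun a ha ↦ by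
    obtain ⟨v, hv, hva⟩ := hmeet a ha
    obtain ⟨b, hb, hba⟩ := Finset.exists_mem_ne hcard a
    obtain ⟨u, hu, hub⟩ := hmeet b hb
    exact hF.le_card_filter_linkBall hv hva hR fun hsub ↦
      Set.disjoint_left.1 (hG ha hb hba.symm) (hsub hu) (linkBall_mono b hR hub)
  calc #G * R ≤ ∑ a ∈ G, #{v ∈ F | v ∈ linkBall N a R} := Finset.card_nsmul_le_sum _ _ _ hball
    _ = #(G.biUnion fun a ↦ {v ∈ F | v ∈ linkBall N a R}) := by
      rw [Finset.card_biUnion]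
      exact fun a ha b hb hab ↦ Finset.disjoint_left.2 fun v hva hvb ↦
        Set.disjoint_left.1 (hG ha hb hab) (Finset.mem_filter.1 hva).2 (Finset.mem_filter.1 hvb).2
    _ ≤ #F := Finset.card_le_card (Finset.biUnion_subset.2 fun _ _ ↦ Finset.filter_subset _ _)

lemma biUnion_freeNbrs_union {Q : Set W} :
    F.biUnion (freeNbrs N (U ∪ Q)) = {w ∈ F.biUnion (freeNbrs N U) | w ∉ Q} := by
  ext w
  simp only [Finset.mem_biUnion, mem_freeNbrs, Finset.mem_filter, Set.mem_union, not_or,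
    ← and_assoc, ← exists_and_right]

lemma exists_card_add_card_freeNbrs_union {y : V → W} (hy : InjOn y A) :
    ∃ G : Finset V, ↑G ⊆ A ∧ G.image y = {w ∈ F.biUnion (freeNbrs N U) | w ∈ y '' A} ∧
      #G + #(F.biUnion (freeNbrs N (U ∪ y '' A))) = #(F.biUnion (freeNbrs N U)) := by
  obtain ⟨G, hGA, hG⟩ := Finset.subset_set_image_iff.1
    (show ↑{w ∈ F.biUnion (freeNbrs N U) | w ∈ y '' A} ⊆ y '' A from
      fun w hw ↦ (Finset.mem_filter.1 hw).2)
  refine ⟨G, hGA, hG, ?_⟩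
  rw [← Finset.card_image_of_injOn (hy.mono hGA), hG, biUnion_freeNbrs_union]
  exact Finset.card_filter_add_card_filter_not _

theorem Expands.diff (h : Expands N k P U) (hk : 0 < k)
    (hA : A.PairwiseDisjoint (linkBall N · (2 * k))) {y : V → W} (hy : ∀ a ∈ A, y a ∈ N a)
    (hall : ∀ a ∈ A, HallCondition N ((P \ {a}) ∩ linkComponent N a) (insert (y a) U)) :
    Expands N (2 * k) (P \ A) (U ∪ y '' A) := by
  intro F hFPA hF
  have hexp : #F + #F / k ≤ #(F.biUnion (freeNbrs N U)) := h F (hFPA.trans sdiff_subset) hF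
  obtain ⟨G, hGA, hG, hcard⟩ := exists_card_add_card_freeNbrs_union (N := N) (U := U) (F := F)
    (injOn_of_pairwiseDisjoint_linkBall hA (by lia) hy)
  have hmeet : ∀ a ∈ G, ∃ v ∈ F, v ∈ linkBall N a 1 := fun a ha ↦ by
    obtain ⟨hw, -⟩ := Finset.mem_filter.1 (hG ▸ Finset.mem_image_of_mem y ha)
    obtain ⟨v, hv, hwv⟩ := Finset.mem_biUnion.1 hw
    exact ⟨v, hv, mem_linkBall_one (hy a (hGA ha)) (mem_freeNbrs.1 hwv).1⟩
  have hdiv : 2 * (#F / (2 * k)) ≤ #F / k := by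
    rw [mul_comm 2 k, ← Nat.div_div_eq_div_mul]
    exact Nat.mul_div_le _ _
  obtain hG0 | hG1 | hG2 : #G = 0 ∨ #G = 1 ∨ 2 ≤ #G := by lia
  · lia
  · obtain ⟨a, rfl⟩ := Finset.card_eq_one.1 hG1
    obtain ⟨v, hv, hva⟩ := hmeet a (Finset.mem_singleton_self a)
    have haA : {a} ⊆ A := by simpa using hGA
    have hFa : #F ≤ #(F.biUnion (freeNbrs N (insert (y a) U))) :=
      hall a (haA rfl) F (subset_inter (hFPA.trans (sdiff_subset_sdiff_right haA))
        (hF.subset_linkComponent hv hva))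
    have hfree : F.biUnion (freeNbrs N (insert (y a) U)) =
        F.biUnion (freeNbrs N (U ∪ y '' A)) := by
      rw [← union_singleton, biUnion_freeNbrs_union, biUnion_freeNbrs_union]
      refine Finset.filter_congr fun w hw ↦ not_congr ?_
      simpa [hw] using! Finset.ext_iff.1 hG w
    lia
  · have : #G ≤ #F / (2 * k) := (Nat.le_div_iff_mul_le (by lia)).2
      (hF.card_mul_le_card (by lia) (hA.subset hGA) hG2 hmeet)
    lia

end Matching

lemma measurable_card_image_filter {α β κ : Type*} [MeasurableSpace α] {f : κ → α → β}
    (hf : ∀ i j, MeasurableSet {a | f i a = f j a}) {p : κ → α → Prop} [∀ i a, Decidable (p i a)]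
    (hp : ∀ i, MeasurableSet {a | p i a}) (K : Finset κ) :
    Measurable fun a ↦ #({i ∈ K | p i a}.image (f · a)) := by
  induction K using Finset.induction_on with
  | empty => simp
  | insert i K _ ih =>
    have hold : MeasurableSet {a | f i a ∈ {j ∈ K | p j a}.image (f · a)} := by
      convert MeasurableSet.biUnion K.countable_toSet fun j _ ↦ (hp j).inter (hf j i) using 1
      ext a
      simp [and_assoc, and_left_comm]
    have hcard : (fun a ↦ #({j ∈ insert i K | p j a}.image (f · a))) = fun a ↦
        if p i a ∧ f i a ∉ {j ∈ K | p j a}.image (f · a) then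
          #({j ∈ K | p j a}.image (f · a)) + 1 else #({j ∈ K | p j a}.image (f · a)) := by
      funext a
      split_ifs with hnew
      · rw [Finset.filter_insert, if_pos hnew.1, Finset.image_insert,
          Finset.card_insert_of_notMem hnew.2]
      · by_cases hpi : p i a
        · rw [Finset.filter_insert, if_pos hpi, Finset.image_insert, Finset.insert_eq_of_mem
            (not_not.1 fun hmem ↦ hnew ⟨hpi, hmem⟩)]
        · rw [Finset.filter_insert, if_neg hpi]
    rw [hcard]
    exact .ite ((hp i).inter hold.compl) (ih.add_const 1) ih

lemma exists_measurable_selector {ι α : Type*} [Nonempty ι] [Countable ι] [MeasurableSpace ι]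
    [MeasurableSpace α] {s : ι → Set α} (hs : ∀ i, MeasurableSet (s i)) :
    ∃ c : α → ι, Measurable c ∧ ∀ a ∈ ⋃ i, s i, a ∈ s (c a) := by
  obtain ⟨e, he⟩ := exists_surjective_nat ι
  obtain ⟨c, hc, hcs⟩ := exists_measurable_piecewise (disjointed (s ∘ e))
    (fun n ↦ .disjointed (fun n ↦ hs (e n)) n) (fun n _ ↦ e n) (fun n ↦ measurable_const)
    fun n m hnm ↦ by simp [(disjoint_disjointed (s ∘ e) hnm).inter_eq]
  refine ⟨c, hc, fun a ha ↦ ?_⟩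
  rw [← he.iUnion_comp, ← iUnion_disjointed] at ha
  obtain ⟨n, hn⟩ := mem_iUnion.1 ha
  rw [hcs n hn]
  exact disjointed_subset _ n hn

section Selectors

variable {Γ X : Type*}

/-- The graph `X × Bool → X` in which each of the two copies of `x` is joined to the translates of
`x` by `S`; the matchings of all of `X × Bool` into `X` are the witnesses of paradoxicality. -/
noncomputable def translates [SMul Γ X] (S : Finset Γ) (v : X × Bool) : Finset X :=
  S.image (· • v.1)

/-- The map `X × Bool → X` that translates each `v` by the group element `c v` selected for it. -/
def selectorMap [SMul Γ X] (c : X × Bool → Γ) (v : X × Bool) : X := c v • v.1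

/-- The parametrization by `Γ × Bool` of the orbit of a point, taken in both copies of `X`. -/
def orbitMap [SMul Γ X] (v : X × Bool) (k : Γ × Bool) : X × Bool := (k.1 • v.1, k.2)

lemma mem_translates [SMul Γ X] {S : Finset Γ} {v : X × Bool} {x : X} :
    x ∈ translates S v ↔ ∃ s ∈ S, s • v.1 = x := by
  simp only [translates, Finset.mem_image]

variable [Group Γ] [MulAction Γ X] {S : Finset Γ}

lemma exists_finset_linkBall_translates (S : Finset Γ) (r : ℕ) :
    ∃ J : Finset Γ, ∀ a v : X × Bool, v ∈ linkBall (translates S) a r → ∃ j ∈ J, v.1 = j • a.1 := by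
  induction r with
  | zero => exact ⟨{1}, fun a v hv ↦ ⟨1, by simp, by simp [show v = a from hv]⟩⟩
  | succ r ih =>
    obtain ⟨J, hJ⟩ := ih
    refine ⟨J ∪ S⁻¹ * S * J, fun a v hv ↦ ?_⟩
    obtain hv | ⟨u, hu, huv⟩ := hv
    · obtain ⟨j, hj, hvj⟩ := hJ a v hv
      exact ⟨j, Finset.mem_union_left _ hj, hvj⟩
    · obtain ⟨j, hj, huj⟩ := hJ a u hu
      obtain ⟨x, hxu, hxv⟩ := Finset.not_disjoint_iff.1 huv
      obtain ⟨s, hs, rfl⟩ := mem_translates.1 hxu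
      obtain ⟨t, ht, hts⟩ := mem_translates.1 hxv
      refine ⟨t⁻¹ * s * j, Finset.mem_union_right _
        (Finset.mul_mem_mul (Finset.mul_mem_mul (Finset.inv_mem_inv ht) hs) hj), ?_⟩
      rw [mul_smul, mul_smul, ← huj, eq_inv_smul_iff, hts]

/-- No translation by an element of `E` moves a point of `B` to another point of `B`: for suitable
`E`, the points of `B` are far apart in the graph `translates S`. -/
def IsSeparated (E : Finset Γ) (B : Set X) : Prop := ∀ x ∈ B, ∀ γ ∈ E, γ • x ∈ B → γ • x = x

lemma exists_pairwiseDisjoint_linkBall_of_isSeparated (S : Finset Γ) (r : ℕ) :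
    ∃ E : Finset Γ, ∀ B : Set X, IsSeparated E B → ∀ b : Bool,
      (B ×ˢ {b}).PairwiseDisjoint (linkBall (translates S) · r) := by
  obtain ⟨J, hJ⟩ := exists_finset_linkBall_translates (X := X) S r
  refine ⟨J⁻¹ * J, fun B hB b ↦ ?_⟩
  rintro ⟨x, a⟩ ⟨hx, rfl⟩ ⟨y, b⟩ ⟨hy, rfl⟩ hxy
  refine Set.disjoint_left.2 fun v hvx hvy ↦ hxy (Prod.ext ?_ rfl)
  obtain ⟨i, hi, hvi⟩ := hJ _ v hvx
  obtain ⟨j, hj, hvj⟩ := hJ _ v hvy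
  have hsmul : (j⁻¹ * i) • x = y := by rw [mul_smul, ← hvi, hvj, inv_smul_smul]
  exact (hB x hx _ (Finset.mul_mem_mul (Finset.inv_mem_inv hj) hi) (hsmul ▸ hy)).symm.trans hsmul

lemma linkComponent_translates_subset (S : Finset Γ) (a : X × Bool) :
    linkComponent (translates S) a ⊆ range (orbitMap (Γ := Γ) a) := by
  refine iUnion_subset fun r v hv ↦ ?_
  obtain ⟨J, hJ⟩ := exists_finset_linkBall_translates (X := X) S r
  obtain ⟨j, -, hj⟩ := hJ a v hv
  exact ⟨(j, v.2), Prod.ext hj.symm rfl⟩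

lemma biUnion_freeNbrs_translates (U : Set X) (v : X × Bool) (K : Finset (Γ × Bool)) :
    K.biUnion (freeNbrs (translates S) U ∘ orbitMap v) =
      {q ∈ K ×ˢ S | q.2 • q.1.1 • v.1 ∉ U}.image fun q ↦ q.2 • q.1.1 • v.1 := by
  ext x
  simp only [Finset.mem_biUnion, Finset.mem_image, comp_apply, mem_freeNbrs, mem_translates,
    orbitMap, Finset.mem_filter, Finset.mem_product]
  constructor
  · rintro ⟨k, hk, ⟨s, hs, rfl⟩, hxU⟩
    exact ⟨(k, s), ⟨⟨hk, hs⟩, hxU⟩, rfl⟩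
  · rintro ⟨⟨k, s⟩, ⟨⟨hk, hs⟩, hxU⟩, rfl⟩
    exact ⟨k, hk, ⟨s, hs, rfl⟩, hxU⟩

lemma expands_translates_mul {T : Finset Γ} {d : X × Bool → Γ} (hd : ∀ v, d v ∈ T)
    (hinj : Injective (selectorMap d)) : Expands (translates (X := X) (T * T)) 1 univ ∅ := by
  intro F _ _
  calc #F + #F / 1 = #((F.image (selectorMap d) ×ˢ Finset.univ).image (selectorMap d)) := by
        rw [Finset.card_image_of_injective _ hinj, Finset.card_product,
          Finset.card_image_of_injective _ hinj, Finset.card_univ, Fintype.card_bool, mul_two,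
          Nat.div_one]
    _ ≤ #(F.biUnion (freeNbrs (translates (T * T)) ∅)) := Finset.card_le_card ?_
  rw [Finset.image_subset_iff]
  rintro ⟨x, b⟩ hx
  obtain ⟨v, hv, rfl : selectorMap d v = x⟩ := Finset.mem_image.1 (Finset.mem_product.1 hx).1
  refine Finset.mem_biUnion.2 ⟨v, hv, mem_freeNbrs.2 ⟨mem_translates.2
    ⟨_, Finset.mul_mem_mul (hd (selectorMap d v, b)) (hd v), ?_⟩, notMem_empty _⟩⟩
  rw [mul_smul]
  rfl

/-- The element `γ` of `S` can be selected for `a` when the vertices in `P` are to be matched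
outside `U`: this leaves a problem that satisfies Hall's condition on the orbit of `a`. -/
def IsExtensibleBy (S : Finset Γ) (P : Set (X × Bool)) (U : Set X) (a : X × Bool) (γ : Γ) : Prop :=
  γ ∈ S ∧ γ • a.1 ∉ U ∧
    HallCondition (translates S) ((P \ {a}) ∩ range (orbitMap (Γ := Γ) a)) (insert (γ • a.1) U)

lemma HallCondition.exists_isExtensibleBy {P : Set (X × Bool)} {U : Set X} {a : X × Bool}
    (h : HallCondition (translates S) P U) (ha : a ∈ P) : ∃ γ : Γ, IsExtensibleBy S P U a γ := by
  obtain ⟨y, hy, hhall⟩ := h.exists_insert ha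
  obtain ⟨hya, hyU⟩ := mem_freeNbrs.1 hy
  obtain ⟨γ, hγ, rfl⟩ := mem_translates.1 hya
  exact ⟨γ, hγ, hyU, hhall.mono inter_subset_left⟩

variable [MeasurableSpace X] [MeasurableConstSMul Γ X]

lemma measurable_orbitMap (k : Γ × Bool) : Measurable fun v : X × Bool ↦ orbitMap v k :=
  (measurable_fst.const_smul k.1).prodMk measurable_const

theorem measurableSet_hallCondition_orbit [Countable Γ] [MeasurableEq X]
    {P : X × Bool → Set (X × Bool)} (hP : ∀ k : Γ × Bool, MeasurableSet {v | orbitMap v k ∈ P v})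
    {U : X × Bool → Set X} (hU : ∀ γ : Γ, MeasurableSet {v : X × Bool | γ • v.1 ∈ U v}) :
    MeasurableSet {v | HallCondition (translates S) (P v ∩ range (orbitMap (Γ := Γ) v)) (U v)} := by
  simp only [hallCondition_inter_range_iff, biUnion_freeNbrs_translates]
  refine measurableSet_setOfPred.2 (.forall fun K ↦ .imp
    (.forall fun k ↦ .imp measurable_const (measurableSet_setOfPred.1 (hP k))) ?_)
  refine measurableSet_setOfPred.1 (measurableSet_le ?_ ?_)
  · have horbit (k l : Γ × Bool) : MeasurableSet {v : X × Bool | orbitMap v k = orbitMap v l} := by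
      simp only [orbitMap, Prod.mk.injEq]
      exact (measurableSet_eq_fun (by fun_prop) (by fun_prop)).inter (.const _)
    simpa using measurable_card_image_filter horbit (p := fun _ _ ↦ True) (by simp) K
  · exact measurable_card_image_filter
      (f := fun (q : (Γ × Bool) × Γ) (v : X × Bool) ↦ q.2 • q.1.1 • v.1)
      (fun p q ↦ measurableSet_eq_fun (by fun_prop) (by fun_prop))
      (fun q ↦ by simp only [← mul_smul]; exact (hU (q.2 * q.1.1)).compl) _

lemma measurableSet_isExtensibleBy [Countable Γ] [MeasurableEq X] {P : Set (X × Bool)} {U : Set X}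
    (hP : MeasurableSet P) (hU : MeasurableSet U) (γ : Γ) :
    MeasurableSet {a | IsExtensibleBy S P U a γ} := by
  have hsmul (δ : Γ) : Measurable fun a : X × Bool ↦ δ • a.1 := by fun_prop
  have hself (k : Γ × Bool) : MeasurableSet {a : X × Bool | orbitMap a k = a} := by
    simp only [orbitMap, Prod.ext_iff]
    exact (measurableSet_eq_fun (hsmul k.1) measurable_fst).inter
      (measurableSet_eq_fun measurable_const measurable_snd)
  exact .inter (.const _) (.inter (hsmul γ hU.compl) (measurableSet_hallCondition_orbit
    (P := fun a ↦ P \ {a}) (fun k ↦ (measurable_orbitMap k hP).inter (hself k).compl)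
    fun δ ↦ .union (measurableSet_eq_fun (hsmul δ) (hsmul γ)) (hsmul δ hU)))

variable [MeasurableSpace Γ] [DiscreteMeasurableSpace Γ]

lemma measurableSet_image_selectorMap [Countable Γ] {c : X × Bool → Γ} (hc : Measurable c)
    {D : Set (X × Bool)} (hD : MeasurableSet D) : MeasurableSet (selectorMap c '' D) := by
  have himage : selectorMap c '' D = ⋃ (b : Bool) (γ : Γ), γ • {x | (x, b) ∈ D ∧ c (x, b) = γ} := by
    ext z
    simp only [mem_image, mem_iUnion, mem_smul_set, Prod.exists]
    constructor
    · rintro ⟨x, b, hx, rfl⟩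
      exact ⟨b, _, x, ⟨hx, rfl⟩, rfl⟩
    · rintro ⟨b, -, x, ⟨hx, rfl⟩, rfl⟩
      exact ⟨x, b, hx, rfl⟩
  rw [himage]
  exact .iUnion fun b ↦ .iUnion fun γ ↦ .const_smul
    (measurable_prodMk_right (hD.inter (hc (measurableSet_singleton γ)))) γ

/-- The selector `c` measurably matches the vertices in `D` to distinct translates by `S`, and the
unmatched vertices still satisfy the expansion condition with constant `k`. -/
structure IsExpandingMatching (S : Finset Γ) (k : ℕ) (D : Set (X × Bool)) (c : X × Bool → Γ) :
    Prop where
  measurable : Measurable c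
  mem : ∀ v ∈ D, c v ∈ S
  injOn : InjOn (selectorMap c) D
  expands : Expands (translates S) k Dᶜ (selectorMap c '' D)

theorem IsExpandingMatching.exists_extend [Countable Γ] [MeasurableEq X] {k : ℕ}
    {D A : Set (X × Bool)} {c : X × Bool → Γ} (h : IsExpandingMatching S k D c) (hk : 0 < k)
    (hD : MeasurableSet D) (hA : A.PairwiseDisjoint (linkBall (translates S) · (2 * k))) :
    ∃ c', EqOn c' c D ∧ IsExpandingMatching S (2 * k) (D ∪ A) c' := by
  have hU : MeasurableSet (selectorMap c '' D) := measurableSet_image_selectorMap h.measurable hD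
  obtain ⟨e, he, heA⟩ := exists_measurable_selector
    (measurableSet_isExtensibleBy (S := S) hD.compl hU)
  have hext : ∀ a ∈ A \ D, IsExtensibleBy S Dᶜ (selectorMap c '' D) a (e a) := fun a ha ↦
    heA a (mem_iUnion.2 (h.expands.hallCondition.exists_isExtensibleBy ha.2))
  have hsparse := hA.subset (sdiff_subset (t := D))
  have hnbr : ∀ a ∈ A \ D, selectorMap e a ∈ translates S a := fun a ha ↦
    mem_translates.2 ⟨e a, (hext a ha).1, rfl⟩
  set c' := D.piecewise c e
  have hcD : EqOn c' c D := piecewise_eqOn D c e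
  have hcA : EqOn c' e (A \ D) := fun a ha ↦ piecewise_eq_of_notMem D c e ha.2
  have hmapD : EqOn (selectorMap c') (selectorMap c) D := fun v hv ↦ congrArg (· • v.1) (hcD hv)
  have hmapA : EqOn (selectorMap c') (selectorMap e) (A \ D) := fun v hv ↦
    congrArg (· • v.1) (hcA hv)
  refine ⟨c', hcD, ?_⟩
  rw [← union_sdiff_self]
  refine ⟨h.measurable.piecewise hD he, ?_, ?_, ?_⟩
  · rintro v (hv | hv)
    · exact hcD hv ▸ h.mem v hv
    · exact hcA hv ▸ (hext v hv).1
  · refine (injOn_union disjoint_sdiff_right).2 ⟨hmapD.injOn_iff.2 h.injOn, hmapA.injOn_iff.2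
      (injOn_of_pairwiseDisjoint_linkBall hsparse (by lia) hnbr), fun v hv a ha heq ↦ ?_⟩
    rw [hmapD hv, hmapA ha] at heq
    exact (hext a ha).2.1 ⟨v, hv, heq⟩
  · rw [compl_union, ← sdiff_eq, image_union, hmapD.image_eq, hmapA.image_eq]
    exact h.expands.diff hk hsparse hnbr fun a ha ↦ (hext a ha).2.2.mono
      (inter_subset_inter_right _ (linkComponent_translates_subset S a))

theorem exists_seq_isExpandingMatching [Countable Γ] [MeasurableEq X] {A : ℕ → Set (X × Bool)}
    (hA : ∀ n, MeasurableSet (A n))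
    (hAs : ∀ n, (A n).PairwiseDisjoint (linkBall (translates S) · (2 * 2 ^ n)))
    (hS : Expands (translates (X := X) S) 1 univ ∅) :
    ∃ c : ℕ → X × Bool → Γ, ∀ n, IsExpandingMatching S (2 ^ n) (⋃ m < n, A m) (c n) ∧
      EqOn (c (n + 1)) (c n) (⋃ m < n, A m) := by
  have hnext (n : ℕ) (c : {c // IsExpandingMatching S (2 ^ n) (⋃ m < n, A m) c}) :
      ∃ c' : {c // IsExpandingMatching S (2 ^ (n + 1)) (⋃ m < n + 1, A m) c},
        EqOn c'.1 c.1 (⋃ m < n, A m) := by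
    obtain ⟨c', heq, hc'⟩ := c.2.exists_extend (by positivity)
      (.biUnion (to_countable _) fun m _ ↦ hA m) (hAs n)
    rw [← pow_succ', ← biUnion_lt_succ] at hc'
    exact ⟨⟨c', hc'⟩, heq⟩
  choose next hnext using hnext
  let c (n : ℕ) : {c // IsExpandingMatching S (2 ^ n) (⋃ m < n, A m) c} :=
    n.rec ⟨fun _ ↦ 1, measurable_const, by simp, by simp, by simpa using hS⟩ next
  exact ⟨fun n ↦ (c n).1, fun n ↦ ⟨(c n).2, hnext n (c n)⟩⟩

theorem exists_measurable_injOn_iUnion [Countable Γ] [MeasurableEq X] {A : ℕ → Set (X × Bool)}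
    (hA : ∀ n, MeasurableSet (A n))
    (hAs : ∀ n, (A n).PairwiseDisjoint (linkBall (translates S) · (2 * 2 ^ n)))
    (hS : Expands (translates (X := X) S) 1 univ ∅) :
    ∃ c : X × Bool → Γ, Measurable c ∧ (∀ v ∈ ⋃ n, A n, c v ∈ S) ∧
      InjOn (selectorMap c) (⋃ n, A n) := by
  obtain ⟨c, hc⟩ := exists_seq_isExpandingMatching hA hAs hS
  set D : ℕ → Set (X × Bool) := fun n ↦ ⋃ m < n, A m
  have hDmono : Monotone D := fun m n hmn ↦
    biUnion_subset_biUnion_left fun i (hi : i < m) ↦ hi.trans_le hmn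
  have hcoh {m n : ℕ} (hmn : m ≤ n) : EqOn (c n) (c m) (D m) := by
    induction n, hmn using Nat.le_induction with
    | base => exact eqOn_refl _ _
    | succ n hmn ih => exact ((hc n).2.mono (hDmono hmn)).trans ih
  obtain ⟨e, he, hec⟩ := exists_measurable_piecewise D
    (fun n ↦ .biUnion (to_countable _) fun m _ ↦ hA m) c (fun n ↦ (hc n).1.measurable)
    fun m n _ v hv ↦ (hcoh (le_max_left m n) hv.1).symm.trans (hcoh (le_max_right m n) hv.2)
  have hDA {v : X × Bool} (hv : v ∈ ⋃ n, A n) : ∃ n, v ∈ D n := by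
    obtain ⟨n, hn⟩ := mem_iUnion.1 hv
    exact ⟨n + 1, mem_biUnion n.lt_succ_self hn⟩
  refine ⟨e, he, fun v hv ↦ ?_, fun v hv u hu heq ↦ ?_⟩
  · obtain ⟨n, hn⟩ := hDA hv
    exact hec n hn ▸ (hc n).1.mem v hn
  · obtain ⟨m, hm⟩ := hDA hv
    obtain ⟨n, hn⟩ := hDA hu
    have hv' := hDmono (le_max_left m n) hm
    have hu' := hDmono (le_max_right m n) hn
    refine (hc (max m n)).1.injOn hv' hu' ?_
    rwa [selectorMap, selectorMap, hec _ hv', hec _ hu'] at heq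

end Selectors

section Category

variable {Γ X : Type*} [Group Γ] [MulAction Γ X]

theorem mem_residual_of_forall_basis [TopologicalSpace X] {b : Set (Set X)}
    (hb : IsTopologicalBasis b) (hbc : b.Countable) {C : Set X} (hC : BaireMeasurableSet C)
    (h : ∀ O ∈ b, IsMeagre (O ∩ C) → IsMeagre O) : C ∈ residual X := by
  obtain ⟨u, hu, hCu⟩ := hC.compl.residualEq_isOpen
  have hdiff : IsMeagre {x | x ∈ u ↔ x ∈ C} :=
    Filter.mem_of_superset (Filter.eventuallyEq_set.1 hCu) fun x hx hxu ↦
      not_iff_self (hx.trans hxu)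
  have humeagre : IsMeagre u := by
    obtain ⟨c, hcb, rfl⟩ := hb.open_eq_sUnion hu
    rw [sUnion_eq_biUnion]
    exact isMeagre_biUnion (hbc.mono hcb) fun O hO ↦ h O (hcb hO)
      (hdiff.mono fun x hx ↦ iff_of_true ⟨O, hO, hx.1⟩ hx.2)
  rw [← compl_compl C]
  exact (humeagre.union hdiff).mono fun x hx ↦
    (em (x ∈ u)).imp_right fun hxu ↦ iff_of_false hxu hx

/-- The points of `O` that no element of `E` moves to another point of `O`. These separated sets,
for basic open `O`, are the sparse sets matched in the stages of the construction. -/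
def separatedPart (E : Finset Γ) (O : Set X) : Set X := {x ∈ O | ∀ γ ∈ E, γ • x ∈ O → γ • x = x}

lemma isSeparated_separatedPart (E : Finset Γ) (O : Set X) : IsSeparated E (separatedPart E O) :=
  fun _ hx γ hγ hγx ↦ hx.2 γ hγ hγx.1

lemma measurableSet_separatedPart [MeasurableSpace X] [MeasurableConstSMul Γ X] [MeasurableEq X]
    (E : Finset Γ) {O : Set X} (hO : MeasurableSet O) : MeasurableSet (separatedPart E O) := by
  have hsmul (γ : Γ) : Measurable fun x : X ↦ γ • x := by fun_prop
  have heq : separatedPart E O = O ∩ ⋂ γ ∈ E, ({x | γ • x ∈ O}ᶜ ∪ {x | γ • x = x}) := by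
    ext x
    simp [separatedPart, imp_iff_not_or]
  rw [heq]
  exact hO.inter (.biInter E.countable_toSet fun γ _ ↦
    (hsmul γ hO).compl.union (measurableSet_eq_fun (hsmul γ) measurable_id))

lemma exists_mem_separatedPart [TopologicalSpace X] [T1Space X] {b : Set (Set X)}
    (hb : IsTopologicalBasis b) (E : Finset Γ) (x : X) : ∃ O ∈ b, x ∈ separatedPart E O := by
  have hfin : ((· • x) '' (E : Set Γ) \ {x}).Finite := (E.finite_toSet.image _).sdiff
  obtain ⟨O, hO, hxO, hsub⟩ := hb.exists_subset_of_mem_open (u := ((· • x) '' (E : Set Γ) \ {x})ᶜ)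
    (fun h ↦ h.2 rfl) hfin.isClosed.isOpen_compl
  exact ⟨O, hO, hxO, fun γ hγ hγO ↦ not_not.1 fun hne ↦ hsub hγO ⟨mem_image_of_mem _ hγ, hne⟩⟩

lemma exists_isMeagre_inter_preimage_separatedPart [TopologicalSpace X] [T1Space X]
    {O : ℕ → Set X} (hO : IsTopologicalBasis (range O)) (E : Finset Γ) (f : X → X) (U : Set X) :
    ∃ n, IsMeagre (U ∩ f ⁻¹' separatedPart E (O n)) → IsMeagre U := by
  by_contra! hmeagre
  refine (hmeagre 0).2 ((isMeagre_iUnion fun n ↦ (hmeagre n).1).mono fun x hx ↦ ?_)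
  obtain ⟨-, ⟨n, rfl⟩, hn⟩ := exists_mem_separatedPart hO E (f x)
  exact mem_iUnion.2 ⟨n, hx, hn⟩

theorem exists_seq_pairwiseDisjoint_linkBall_residual [Countable Γ] [TopologicalSpace X]
    [SecondCountableTopology X] [T1Space X] [MeasurableSpace X] [BorelSpace X] [MeasurableEq X]
    [MeasurableConstSMul Γ X]
    (S : Finset Γ) (R : ℕ → ℕ) : ∃ A : ℕ → Set (X × Bool), (∀ n, MeasurableSet (A n)) ∧
      (∀ n, (A n).PairwiseDisjoint (linkBall (translates S) · (R n))) ∧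
      {x | ∀ (γ : Γ) (b : Bool), (γ • x, b) ∈ ⋃ n, A n} ∈ residual X := by
  obtain ⟨O, hO⟩ := ((countable_countableBasis X).insert ∅).exists_eq_range (insert_nonempty _ _)
  have hOb : IsTopologicalBasis (range O) := hO ▸ (isBasis_countableBasis X).insert_empty
  choose E hE using fun n ↦ exists_pairwiseDisjoint_linkBall_of_isSeparated (X := X) S (R n)
  obtain ⟨e, he⟩ := exists_surjective_nat (ℕ × Γ × Bool)
  choose m hm using fun n ↦ exists_isMeagre_inter_preimage_separatedPart hOb (E n)
    ((e n).2.1 • ·) (O (e n).1)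
  have hmeas (n : ℕ) : MeasurableSet (separatedPart (E n) (O (m n)) ×ˢ {(e n).2.2}) :=
    (measurableSet_separatedPart _ (hOb.isOpen ⟨_, rfl⟩).measurableSet).prod (.singleton _)
  refine ⟨_, hmeas, fun n ↦ hE n _ (isSeparated_separatedPart _ _) _, ?_⟩
  simp only [ofPred_forall, countable_iInter_mem]
  intro γ b
  have hC := ((measurable_const_smul γ).prodMk (measurable_const (a := b))) (.iUnion hmeas)
  refine mem_residual_of_forall_basis hOb (countable_range _) hC.baireMeasurableSet ?_
  rintro - ⟨i, rfl⟩ hi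
  obtain ⟨n, hn⟩ := he (i, γ, b)
  have hmn := hm n
  simp only [hn] at hmn
  refine hmn (hi.mono (inter_subset_inter_right _ fun x hx ↦ ?_))
  exact mem_iUnion.2 ⟨n, hx, by simp only [hn, mem_singleton_iff]⟩

end Category

section Decomposition

variable {Γ X : Type*} [Group Γ] [MulAction Γ X] {c : X × Bool → Γ} {S : Finset Γ}

/-- The action of `Γ` on `X` has a paradoxical decomposition whose pieces all satisfy `p`. -/
def HasParadoxicalDecomposition (Γ : Type*) {X : Type*} [Group Γ] [MulAction Γ X]
    (p : Set X → Prop) : Prop :=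
  ∃ (n m : ℕ) (A : Fin n → Set X) (B : Fin m → Set X) (α : Fin n → Γ) (β : Fin m → Γ),
    (∀ i, p (A i)) ∧ (∀ j, p (B j)) ∧ IsParadoxicalDecomposition A B α β

lemma HasParadoxicalDecomposition.mono {p q : Set X → Prop}
    (h : HasParadoxicalDecomposition Γ p) (hpq : ∀ s, p s → q s) :
    HasParadoxicalDecomposition Γ q := by
  obtain ⟨n, m, A, B, α, β, hA, hB, hAB⟩ := h
  exact ⟨n, m, A, B, α, β, fun i ↦ hpq _ (hA i), fun j ↦ hpq _ (hB j), hAB⟩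

lemma exists_injective_smul_of_iUnion_smul_eq_univ {ι : Type*} {A : ι → Set X} {α : ι → Γ}
    (hdisj : ∀ i j, i ≠ j → Disjoint (A i) (A j)) (hcover : ⋃ i, α i • A i = univ) :
    ∃ d : X → Γ, (∀ x, d x ∈ range fun i ↦ (α i)⁻¹) ∧ (∀ x, d x • x ∈ ⋃ i, A i) ∧
      Injective fun x ↦ d x • x := by
  choose i hi using fun x ↦ mem_iUnion.1 (hcover.ge (mem_univ x))
  have hmem (x : X) : (α (i x))⁻¹ • x ∈ A (i x) := mem_smul_set_iff_inv_smul_mem.1 (hi x)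
  refine ⟨fun x ↦ (α (i x))⁻¹, fun x ↦ mem_range_self _, fun x ↦ mem_iUnion_of_mem _ (hmem x),
    fun x y (hxy : (α (i x))⁻¹ • x = (α (i y))⁻¹ • y) ↦ ?_⟩
  have hixy : i x = i y := by
    by_contra hne
    exact Set.disjoint_left.1 (hdisj _ _ hne) (hmem x) (hxy ▸ hmem y)
  rwa [hixy, smul_left_cancel_iff] at hxy

theorem IsParadoxicalDecomposition.exists_injective_selectorMap {n m : ℕ} {A : Fin n → Set X}
    {B : Fin m → Set X} {α : Fin n → Γ} {β : Fin m → Γ}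
    (h : IsParadoxicalDecomposition A B α β) :
    ∃ (T : Finset Γ) (d : X × Bool → Γ), (∀ v, d v ∈ T) ∧ Injective (selectorMap d) := by
  obtain ⟨hA, hB, hAB, -, -, -, hαA, hβB⟩ := h
  obtain ⟨d, hdα, hdA, hd⟩ := exists_injective_smul_of_iUnion_smul_eq_univ hA hαA
  obtain ⟨e, heβ, heB, he⟩ := exists_injective_smul_of_iUnion_smul_eq_univ hB hβB
  have hne (x y : X) : d x • x ≠ e y • y := by
    have hdisj : Disjoint (⋃ i, A i) (⋃ j, B j) :=
      disjoint_iUnion_left.2 fun i ↦ disjoint_iUnion_right.2 (hAB i)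
    exact hdisj.ne_of_mem (hdA x) (heB y)
  refine ⟨Finset.univ.image (fun i ↦ (α i)⁻¹) ∪ Finset.univ.image (fun j ↦ (β j)⁻¹),
    fun v ↦ if v.2 then d v.1 else e v.1, ?_, ?_⟩
  · rintro ⟨x, _ | _⟩
    · simpa using Or.inr (heβ x)
    · simpa using Or.inl (hdα x)
  · rintro ⟨x, _ | _⟩ ⟨y, _ | _⟩ hxy
    · exact congrArg (·, false) (he hxy)
    · exact (hne y x hxy.symm).elim
    · exact (hne x y hxy).elim
    · exact congrArg (·, true) (hd hxy)

lemma bijective_selectorMap_piecewise (hc : Injective (selectorMap c)) {Z : Set X}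
    (hZ : selectorMap c '' (Z ×ˢ {false} ∪ univ ×ˢ {true}) = Z) :
    Bijective (selectorMap ((Z ×ˢ {false} ∪ univ ×ˢ {true}).piecewise c 1)) := by
  set D : Set (X × Bool) := Z ×ˢ {false} ∪ univ ×ˢ {true}
  have hin {v : X × Bool} (hv : v ∈ D) : selectorMap (D.piecewise c 1) v = selectorMap c v := by
    rw [selectorMap, piecewise_eq_of_mem _ _ _ hv, selectorMap]
  have hout {v : X × Bool} (hv : v ∉ D) : selectorMap (D.piecewise c 1) v = v.1 := by
    rw [selectorMap, piecewise_eq_of_notMem _ _ _ hv, Pi.one_apply, one_smul]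
  have hfst {v : X × Bool} (hv : v ∉ D) : v.1 ∉ Z ∧ v.2 = false := by
    obtain ⟨x, b⟩ := v
    simp only [D, mem_union, mem_prod, mem_singleton_iff, mem_univ, true_and, not_or,
      not_and, Bool.not_eq_true] at hv
    exact ⟨fun hx ↦ hv.1 hx hv.2, hv.2⟩
  have hne {v u : X × Bool} (hv : v ∈ D) (hu : u ∉ D) : selectorMap c v ≠ u.1 :=
    fun h ↦ (hfst hu).1 (hZ ▸ ⟨v, hv, h⟩)
  refine ⟨fun v u hvu ↦ ?_, fun x ↦ ?_⟩
  · by_cases hv : v ∈ D <;> by_cases hu : u ∈ D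
    · exact hc (by rwa [hin hv, hin hu] at hvu)
    · exact (hne hv hu (by rwa [hin hv, hout hu] at hvu)).elim
    · exact (hne hu hv (by rw [← hin hu, ← hvu, hout hv])).elim
    · exact Prod.ext (by rwa [hout hv, hout hu] at hvu) ((hfst hv).2.trans (hfst hu).2.symm)
  · by_cases hx : x ∈ Z
    · obtain ⟨v, hv, rfl⟩ := hZ.symm ▸ hx
      exact ⟨v, hin hv⟩
    · exact ⟨(x, false), hout (by simp [D, hx])⟩

lemma inv_smul_image_selectorMap (c : X × Bool → Γ) (b : Bool) (γ : Γ) :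
    γ⁻¹ • selectorMap c '' {v | v.2 = b ∧ c v = γ} = {x | c (x, b) = γ} := by
  ext x
  simp only [mem_inv_smul_set_iff, mem_image, mem_ofPred_eq, Prod.exists, selectorMap]
  constructor
  · rintro ⟨y, b', ⟨rfl, hy⟩, hyx⟩
    obtain rfl : y = x := smul_left_cancel γ (hy ▸ hyx)
    exact hy
  · rintro rfl
    exact ⟨x, b, ⟨rfl, rfl⟩, rfl⟩

variable [Countable Γ] [MeasurableSpace Γ] [DiscreteMeasurableSpace Γ]
  {mX : MeasurableSpace X} [MeasurableConstSMul Γ X]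

lemma exists_measurableSet_image_selectorMap_eq (hc : Measurable c) :
    ∃ Z : Set X, MeasurableSet Z ∧ selectorMap c '' (Z ×ˢ {false} ∪ univ ×ˢ {true}) = Z := by
  let Z (n : ℕ) : Set X :=
    (fun Y ↦ selectorMap c '' (Y ×ˢ {false}))^[n] (selectorMap c '' (univ ×ˢ {true}))
  have hZ (n : ℕ) : MeasurableSet (Z n) := by
    induction n with
    | zero => exact measurableSet_image_selectorMap hc (.prod .univ (.singleton _))
    | succ n ih =>
      simp only [Z, iterate_succ_apply']
      exact measurableSet_image_selectorMap hc (ih.prod (.singleton _))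
  refine ⟨⋃ n, Z n, .iUnion hZ, ?_⟩
  rw [image_union, iUnion_prod_const, image_iUnion, union_comm, ← union_iUnion_nat_succ Z]
  simp only [Z, iterate_succ_apply', iterate_zero_apply]

theorem exists_measurable_bijective_selectorMap (hc : Measurable c) (hcS : ∀ v, c v ∈ S)
    (hinj : Injective (selectorMap c)) :
    ∃ e : X × Bool → Γ, Measurable e ∧ (∀ v, e v ∈ insert 1 S) ∧ Bijective (selectorMap e) := by
  obtain ⟨Z, hZ, hZc⟩ := exists_measurableSet_image_selectorMap_eq hc
  refine ⟨_, hc.piecewise ((hZ.prod (.singleton _)).union (.prod .univ (.singleton _)))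
    measurable_const, fun v ↦ ?_, bijective_selectorMap_piecewise hinj hZc⟩
  by_cases hv : v ∈ Z ×ˢ {false} ∪ univ ×ˢ {true}
  · exact piecewise_eq_of_mem _ c 1 hv ▸ Finset.mem_insert_of_mem (hcS v)
  · exact piecewise_eq_of_notMem _ c 1 hv ▸ Finset.mem_insert_self 1 S

theorem hasParadoxicalDecomposition_of_bijective (hc : Measurable c) (hcS : ∀ v, c v ∈ S)
    (hbij : Bijective (selectorMap c)) :
    HasParadoxicalDecomposition Γ (MeasurableSet (α := X)) := by
  let g (i : Fin #S) : Γ := S.equivFin.symm i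
  have hg : Injective g := Subtype.val_injective.comp S.equivFin.symm.injective
  have hgS (v : X × Bool) : ∃ i, c v = g i := ⟨S.equivFin ⟨c v, hcS v⟩, by simp [g]⟩
  let A (b : Bool) (i : Fin #S) : Set X := selectorMap c '' {v | v.2 = b ∧ c v = g i}
  have hA (b : Bool) (i : Fin #S) : MeasurableSet (A b i) :=
    measurableSet_image_selectorMap hc
      ((measurable_snd (measurableSet_singleton b)).inter (hc (measurableSet_singleton (g i))))
  have hdisj {b b' : Bool} {i j : Fin #S} (h : b = b' → i ≠ j) : Disjoint (A b i) (A b' j) :=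
    (disjoint_image_iff hbij.injective).2 <| Set.disjoint_left.2 fun v hv hv' ↦
      h (hv.1.symm.trans hv'.1) (hg (hv.2.symm.trans hv'.2))
  have hcover : (⋃ i, A true i) ∪ ⋃ i, A false i = univ := by
    refine eq_univ_of_forall fun x ↦ ?_
    obtain ⟨⟨y, b⟩, rfl⟩ := hbij.surjective x
    obtain ⟨i, hi⟩ := hgS (y, b)
    have hx : selectorMap c (y, b) ∈ ⋃ i, A b i := mem_iUnion_of_mem i ⟨_, ⟨rfl, hi⟩, rfl⟩
    cases b
    · exact Or.inr hx
    · exact Or.inl hx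
  have hsmul_disj (b : Bool) (i j : Fin #S) (hij : i ≠ j) :
      Disjoint ((g i)⁻¹ • A b i) ((g j)⁻¹ • A b j) := by
    rw [inv_smul_image_selectorMap, inv_smul_image_selectorMap]
    exact Set.disjoint_left.2 fun x hx hx' ↦ hij (hg (hx.symm.trans hx'))
  have hsmul_cover (b : Bool) : ⋃ i, (g i)⁻¹ • A b i = univ := by
    simp only [A, inv_smul_image_selectorMap]
    exact iUnion_eq_univ_iff.2 fun x ↦ hgS (x, b)
  exact ⟨_, _, A true, A false, _, _, hA true, hA false, fun _ _ hij ↦ hdisj fun _ ↦ hij,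
    fun _ _ hij ↦ hdisj fun _ ↦ hij, fun _ _ ↦ hdisj nofun, hcover,
    hsmul_disj true, hsmul_disj false, hsmul_cover true, hsmul_cover false⟩

end Decomposition

section Residual

open scoped MeasureTheory

variable {Γ X : Type*} [Group Γ] [MulAction Γ X]

/-- The σ-algebra of the sets whose trace on `C` is measurable, for arguments in which sets may be
arbitrary off `C`. -/
abbrev traceSpace [MeasurableSpace X] (C : Set X) : MeasurableSpace X :=
  .map ((↑) : C → X) inferInstance

lemma measurableConstSMul_traceSpace [MeasurableSpace X] [MeasurableConstSMul Γ X] {C : Set X}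
    (hC : ∀ (γ : Γ), ∀ x ∈ C, γ • x ∈ C) : @MeasurableConstSMul Γ X _ (traceSpace C) := by
  have hres (γ : Γ) : Measurable fun x : C ↦ (⟨γ • x.1, hC γ x x.2⟩ : C) :=
    (measurable_subtype_coe.const_smul γ).subtype_mk
  exact @MeasurableConstSMul.mk Γ X _ (traceSpace C) fun γ s hs ↦ hres γ hs

lemma injective_selectorMap_piecewise {C : Set X} (hC : ∀ (γ : Γ), ∀ x ∈ C, γ • x ∈ C)
    {c d : X × Bool → Γ} (hc : InjOn (selectorMap c) (Prod.fst ⁻¹' C))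
    (hd : Injective (selectorMap d)) :
    Injective (selectorMap ((Prod.fst ⁻¹' C).piecewise c d)) := by
  set e : X × Bool → Γ := (Prod.fst ⁻¹' C).piecewise c d
  have hec {v : X × Bool} (hv : v.1 ∈ C) : selectorMap e v = selectorMap c v :=
    congrArg (· • v.1) (piecewise_eq_of_mem _ c d hv)
  have hed {v : X × Bool} (hv : v.1 ∉ C) : selectorMap e v = selectorMap d v :=
    congrArg (· • v.1) (piecewise_eq_of_notMem _ c d hv)
  have hmem (v : X × Bool) : selectorMap e v ∈ C ↔ v.1 ∈ C :=
    ⟨fun h ↦ inv_smul_smul (e v) v.1 ▸ hC (e v)⁻¹ _ h, hC (e v) v.1⟩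
  intro v u hvu
  have hvuC : v.1 ∈ C ↔ u.1 ∈ C := by rw [← hmem v, ← hmem u, hvu]
  by_cases hv : v.1 ∈ C
  · exact hc hv (hvuC.1 hv) (by rwa [hec hv, hec (hvuC.1 hv)] at hvu)
  · exact hd (by rwa [hed hv, hed (mt hvuC.2 hv)] at hvu)

theorem hasParadoxicalDecomposition_measurableSet_traceSpace [Countable Γ] [MeasurableSpace Γ]
    [DiscreteMeasurableSpace Γ] [MeasurableSpace X] [MeasurableConstSMul Γ X] {C : Set X}
    (hC : ∀ (γ : Γ), ∀ x ∈ C, γ • x ∈ C) {S T : Finset Γ} {c d : X × Bool → Γ}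
    (hc : Measurable c) (hcS : ∀ v, v.1 ∈ C → c v ∈ S)
    (hcinj : InjOn (selectorMap c) (Prod.fst ⁻¹' C)) (hdT : ∀ v, d v ∈ T)
    (hdinj : Injective (selectorMap d)) :
    HasParadoxicalDecomposition Γ (MeasurableSet[traceSpace C]) := by
  set e : X × Bool → Γ := (Prod.fst ⁻¹' C).piecewise c d
  have heC {v : X × Bool} (hv : v.1 ∈ C) : e v = c v := piecewise_eq_of_mem _ c d hv
  have hed {v : X × Bool} (hv : v.1 ∉ C) : e v = d v := piecewise_eq_of_notMem _ c d hv
  have heS (v : X × Bool) : e v ∈ S ∪ T := by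
    by_cases hv : v.1 ∈ C
    · exact Finset.mem_union_left _ (heC hv ▸ hcS v hv)
    · exact Finset.mem_union_right _ (hed hv ▸ hdT v)
  have hsection (b : Bool) : Measurable fun x : C ↦ e (x, b) := by
    have hec : (fun x : C ↦ e (x, b)) = fun x : C ↦ c (x, b) := funext fun x ↦ heC x.2
    exact hec ▸ hc.comp (measurable_subtype_coe.prodMk measurable_const)
  have hsmul := measurableConstSMul_traceSpace hC
  let mX := traceSpace C
  have he : Measurable e := measurable_from_prod_countable_left fun b s hs ↦ hsection b hs
  obtain ⟨f, hf, hfS, hfbij⟩ := exists_measurable_bijective_selectorMap he heS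
    (injective_selectorMap_piecewise hC hcinj hdinj)
  exact hasParadoxicalDecomposition_of_bijective hf hfS hfbij

theorem hasParadoxicalDecomposition_baireMeasurableSet [Countable Γ]
    [TopologicalSpace X] [SecondCountableTopology X] [T2Space X] [MeasurableSpace X] [BorelSpace X]
    [MeasurableConstSMul Γ X] {T : Finset Γ} {d : X × Bool → Γ} (hdT : ∀ v, d v ∈ T)
    (hdinj : Injective (selectorMap d)) :
    HasParadoxicalDecomposition Γ (BaireMeasurableSet (α := X)) := by
  let _ : MeasurableSpace Γ := ⊤
  obtain ⟨A, hA, hAs, hres⟩ :=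
    exists_seq_pairwiseDisjoint_linkBall_residual (X := X) (T * T) (2 * 2 ^ ·)
  obtain ⟨c, hc, hcS, hcinj⟩ :=
    exists_measurable_injOn_iUnion hA hAs (expands_translates_mul hdT hdinj)
  set C : Set X := {x | ∀ (γ : Γ) (b : Bool), (γ • x, b) ∈ ⋃ n, A n}
  have hCmeas : MeasurableSet C := by
    simp only [C, ofPred_forall]
    exact .iInter fun γ ↦ .iInter fun b ↦
      ((measurable_const_smul γ).prodMk measurable_const) (.iUnion hA)
  have hCA {v : X × Bool} (hv : v.1 ∈ C) : v ∈ ⋃ n, A n := by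
    simpa only [one_smul] using hv 1 v.2
  have hCsmul (γ : Γ) (x : X) (hx : x ∈ C) : γ • x ∈ C := fun δ b ↦ by
    rw [smul_smul]
    exact hx (δ * γ) b
  refine (hasParadoxicalDecomposition_measurableSet_traceSpace hCsmul hc (fun v hv ↦ hcS v (hCA hv))
    (hcinj.mono fun v ↦ hCA) hdT hdinj).mono fun s hs ↦ ?_
  have hsC : MeasurableSet (s ∩ C) := by
    rw [inter_comm, ← Subtype.image_preimage_coe]
    exact (MeasurableEmbedding.subtype_coe hCmeas).measurableSet_image.2 hs
  exact hsC.baireMeasurableSet.congr 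
    (Filter.inter_eventuallyEq_left.2 (Filter.mem_of_superset hres fun x hx _ ↦ hx))

end Residual

theorem baire_paradox_general {Γ X : Type*} [Group Γ] [TopologicalSpace X]
    [SecondCountableTopology X] [T2Space X] [MeasurableSpace X] [BorelSpace X] [MulAction Γ X]
    (hBorelAction : ∀ γ : Γ, Measurable (fun x : X => γ • x))
    (hpara : ∃ (n m : ℕ) (A : Fin n → Set X) (B : Fin m → Set X) (α : Fin n → Γ)
      (β : Fin m → Γ), IsParadoxicalDecomposition A B α β) :
    ∃ (n m : ℕ) (A : Fin n → Set X) (B : Fin m → Set X) (α : Fin n → Γ) (β : Fin m → Γ),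
      (∀ i, BaireMeasurableSet (A i)) ∧ (∀ j, BaireMeasurableSet (B j)) ∧
      IsParadoxicalDecomposition A B α β := by
  obtain ⟨n, m, A, B, α, β, hAB⟩ := hpara
  let Δ : Subgroup Γ := (FreeGroup.lift (Sum.elim α β)).range
  have : Countable Δ := (FreeGroup.lift (Sum.elim α β)).rangeRestrict_surjective.countable
  have : MeasurableConstSMul Δ X := ⟨fun γ ↦ hBorelAction γ⟩
  let α' (i : Fin n) : Δ := ⟨α i, ⟨.of (.inl i), FreeGroup.lift_apply_of⟩⟩
  let β' (j : Fin m) : Δ := ⟨β j, ⟨.of (.inr j), FreeGroup.lift_apply_of⟩⟩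
  have hAB' : IsParadoxicalDecomposition A B α' β' := hAB
  obtain ⟨T, d, hdT, hd⟩ := hAB'.exists_injective_selectorMap
  obtain ⟨n', m', A', B', γ, δ, hA', hB', hAB''⟩ :=
    hasParadoxicalDecomposition_baireMeasurableSet hdT hd
  exact ⟨n', m', A', B', fun i ↦ γ i, fun j ↦ δ j, hA', hB', hAB''⟩

/-- **Theorem (Marks–Unger).** If a group acting on a Polish space by Borel automorphisms has a
paradoxical decomposition, then it has a paradoxical decomposition in which every piece has the
Baire property. -/
theorem baire_paradox {Γ X : Type*} [Group Γ] [TopologicalSpace X] [PolishSpace X]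
    [MeasurableSpace X] [BorelSpace X] [MulAction Γ X]
    (hBorelAction : ∀ γ : Γ, Measurable (fun x : X => γ • x))
    (hpara : ∃ (n m : ℕ) (A : Fin n → Set X) (B : Fin m → Set X) (α : Fin n → Γ)
      (β : Fin m → Γ), IsParadoxicalDecomposition A B α β) :
    ∃ (n m : ℕ) (A : Fin n → Set X) (B : Fin m → Set X) (α : Fin n → Γ) (β : Fin m → Γ),
      (∀ i, BaireMeasurableSet (A i)) ∧ (∀ j, BaireMeasurableSet (B j)) ∧
      IsParadoxicalDecomposition A B α β :=
  baire_paradox_general hBorelAction hpara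
end
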